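/- arXiv:2504.01642 — 2 statements merged into one kernel-verified Lean document; each statement's English description precedes it below -/
import Mathlib

section
/- For every μ > 0 there exist constants 0 < c, ε ≤ 1 and n₀ ∈ ℕ such that the following holds for all n ≥ n₀. If G is an n-vertex graph that is ⌈εn⌉-joined and has minimum degree δ(G) ≥ μn, then G contains a spanning nearly-balanced subdivision of the complete graph K_t for every integer t with 2 ≤ t ≤ c·√n. -/
open SimpleGraph

/-- `G` is `m`-joined: between any two disjoint vertex sets of size `m` there is an edge. -/
def IsJoined {V : Type*} (G : SimpleGraph V) (m : ℕ) : Prop :=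
  ∀ A B : Finset V, Disjoint A B → A.card = m → B.card = m →
    ∃ a ∈ A, ∃ b ∈ B, G.Adj a b

/-- `G` contains a spanning nearly-balanced subdivision of the complete graph `K_t`:
there are `t` (distinct) branch vertices, pairwise internally disjoint paths
joining every pair of branch vertices, every vertex of `G` lies on one of these
paths, and there is a positive integer `ℓ` such that every branching path has
length between `ℓ - 1` and `ℓ + 1`. -/
def HasSpanningNearlyBalancedKSubdivision {V : Type*} (G : SimpleGraph V) (t : ℕ) : Prop :=
  ∃ (b : Fin t ↪ V) (P : ∀ i j : Fin t, i < j → G.Walk (b i) (b j)),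
    (∀ i j (h : i < j), (P i j h).IsPath) ∧
    (∀ i j (h : i < j) (k : Fin t), k ≠ i → k ≠ j → b k ∉ (P i j h).support) ∧
    (∀ i j (h : i < j) (i' j' : Fin t) (h' : i' < j'), ¬(i = i' ∧ j = j') →
      ∀ v : V, v ∈ (P i j h).support → v ∈ (P i' j' h').support →
        ∃ k : Fin t, v = b k) ∧
    (∀ v : V, ∃ (i j : Fin t) (h : i < j), v ∈ (P i j h).support) ∧
    (∃ ℓ : ℕ, 1 ≤ ℓ ∧ ∀ i j (h : i < j),
      ℓ - 1 ≤ (P i j h).length ∧ (P i j h).length ≤ ℓ + 1)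

section Joined

variable {V : Type*} {G : SimpleGraph V} {m : ℕ}

theorem IsJoined.exists_adj [DecidableEq V] (hJ : IsJoined G m) {A C : Finset V}
    (hA : m ≤ A.card) (hC : 2 * m ≤ C.card) : ∃ a ∈ A, ∃ c ∈ C, G.Adj a c := by
  obtain ⟨A', hA', hA'm⟩ := Finset.exists_subset_card_eq hA
  have : m ≤ (C \ A').card := by
    have := Finset.le_card_sdiff A' C
    omega
  obtain ⟨C', hC', hC'm⟩ := Finset.exists_subset_card_eq this
  obtain ⟨a, ha, c, hc, hac⟩ := hJ A' C'
    (Finset.disjoint_of_subset_right hC' Finset.disjoint_sdiff) hA'm hC'm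
  exact ⟨a, hA' ha, c, (Finset.mem_sdiff.1 (hC' hc)).1, hac⟩

/-- If all colour classes of `A` are small, some initial segment of colours captures
about `m` elements of `A`. -/
theorem exists_colour_threshold (col : V → ℕ) {L : ℕ} {A : Finset V}
    (hL : ∀ c, (A.filter (col · = c)).card ≤ L) (hA : m ≤ A.card) :
    ∃ s, m ≤ (A.filter (col · < s)).card ∧ (A.filter (col · < s)).card ≤ m + L := by
  classical
  have hex : ∃ s, m ≤ (A.filter (col · < s)).card := by
    refine ⟨A.sup col + 1, ?_⟩
    rwa [Finset.filter_true_of_mem fun a ha => Nat.lt_succ_of_le (Finset.le_sup (f := col) ha)]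
  refine ⟨Nat.find hex, Nat.find_spec hex, ?_⟩
  rcases h : Nat.find hex with _ | s
  · simp
  · have hs : (A.filter (col · < s)).card < m := by
      have := Nat.find_min hex (m := s) (by omega)
      omega
    have hsub : A.filter (col · < s + 1) ⊆ A.filter (col · < s) ∪ A.filter (col · = s) := by
      intro a
      simp only [Finset.mem_filter, Finset.mem_union]
      grind
    have := Finset.card_le_card hsub
    have := Finset.card_union_le (A.filter (col · < s)) (A.filter (col · = s))
    have := hL s
    omega

theorem IsJoined.exists_adj_colour_ne [DecidableEq V] (hJ : IsJoined G m) (col : V → ℕ) {L : ℕ}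
    {A C : Finset V} (hLA : ∀ c, (A.filter (col · = c)).card ≤ L)
    (hLC : ∀ c, (C.filter (col · = c)).card ≤ L)
    (hA : 2 * m + L ≤ A.card) (hC : 2 * m + L ≤ C.card) :
    ∃ a ∈ A, ∃ c ∈ C, col a ≠ col c ∧ G.Adj a c := by
  have key : ∀ (A C : Finset V) (s : ℕ), m ≤ (A.filter (col · < s)).card →
      (C.filter (col · < s)).card ≤ m + L → 2 * m + L ≤ C.card →
      ∃ a ∈ A, ∃ c ∈ C, col a ≠ col c ∧ G.Adj a c := by
    intro A C s h1 h2 h3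
    have h4 := Finset.card_filter_add_card_filter_not (s := C) (fun v => col v < s)
    obtain ⟨A', hA', hA'm⟩ := Finset.exists_subset_card_eq h1
    obtain ⟨C', hC', hC'm⟩ := Finset.exists_subset_card_eq
      (show m ≤ (C.filter (fun v => ¬ col v < s)).card by omega)
    have hlt : ∀ a ∈ A', ∀ c ∈ C', col a < col c := fun a ha c hc => by
      have h1 := (Finset.mem_filter.1 (hA' ha)).2
      have h2 := (Finset.mem_filter.1 (hC' hc)).2
      omega
    obtain ⟨a, ha, c, hc, hac⟩ := hJ A' C'
      (Finset.disjoint_left.2 fun v hv hv' => (hlt v hv v hv').ne rfl) hA'm hC'm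
    exact ⟨a, (Finset.mem_filter.1 (hA' ha)).1, c, (Finset.mem_filter.1 (hC' hc)).1,
      (hlt a ha c hc).ne, hac⟩
  obtain ⟨s, hs1, hs2⟩ := exists_colour_threshold (m := m) col hLA (by omega)
  obtain ⟨s', hs1', hs2'⟩ := exists_colour_threshold (m := m) col hLC (by omega)
  have mono : ∀ (A : Finset V) {s s' : ℕ}, s ≤ s' →
      (A.filter (col · < s)).card ≤ (A.filter (col · < s')).card := fun A s s' h =>
    Finset.card_le_card (Finset.monotone_filter_right _ fun a _ (ha : col a < s) => ha.trans_le h)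
  rcases le_total s s' with h | h
  · exact key A C s hs1 ((mono C h).trans hs2') hC
  · obtain ⟨c, hc, a, ha, hne, hadj⟩ := key C A s' hs1' ((mono A h).trans hs2) hA
    exact ⟨a, ha, c, hc, hne.symm, hadj.symm⟩

/-- Greedy construction of `M` links of the form `p i - h (2 i) - h (2 i + 1) - q i` whose inner
vertices lie in `Z` and have pairwise distinct colours. -/
theorem IsJoined.exists_links [DecidableEq V] [DecidableRel G.Adj] (hJ : IsJoined G m)
    (Z : Finset V) (col : V → ℕ) {L : ℕ}
    (hL : ∀ c, (Z.filter (col · = c)).card ≤ L) (p q : ℕ → V) (M : ℕ)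
    (hM : M ≠ 0 → ∀ v, 2 * M * L + 2 * m ≤ (Z.filter (G.Adj v)).card) :
    ∃ h : ℕ → V, (∀ i < M, G.Adj (p i) (h (2 * i)) ∧ G.Adj (h (2 * i)) (h (2 * i + 1)) ∧
      G.Adj (h (2 * i + 1)) (q i)) ∧ (∀ j < 2 * M, h j ∈ Z) ∧
      ∀ i < 2 * M, ∀ j < 2 * M, col (h i) = col (h j) → i = j := by
  induction M with
  | zero => exact ⟨p, by simp⟩
  | succ M ih =>
    obtain ⟨h, h1, h2, h3⟩ := ih fun _ v => by have := hM (by omega) v; nlinarith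
    let X : Finset V := (Finset.range (2 * M)).biUnion fun j => Z.filter (col · = col (h j))
    have hX : X.card ≤ 2 * M * L := by
      refine (Finset.card_biUnion_le_card_mul _ _ L fun j _ => hL _).trans ?_
      simp
    have hdeg : ∀ v, 2 * m + L ≤ (Z.filter (G.Adj v) \ X).card := fun v => by
      have := Finset.le_card_sdiff X (Z.filter (G.Adj v))
      have := hM (by omega) v
      have : 2 * (M + 1) * L = 2 * M * L + 2 * L := by ring
      omega
    have hcl : ∀ v c, ((Z.filter (G.Adj v) \ X).filter (col · = c)).card ≤ L := fun v c =>
      (Finset.card_le_card (Finset.filter_subset_filter _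
        (Finset.sdiff_subset.trans (Finset.filter_subset _ _)))).trans (hL c)
    obtain ⟨a, ha, b, hb, hne, hadj⟩ := hJ.exists_adj_colour_ne col (hcl (p M)) (hcl (q M))
      (hdeg _) (hdeg _)
    simp only [Finset.mem_sdiff, Finset.mem_filter, X, Finset.mem_biUnion, Finset.mem_range,
      not_exists, not_and] at ha hb
    refine ⟨fun j => if j < 2 * M then h j else if j = 2 * M then a else b, ?_, ?_, ?_⟩
    · intro i hi
      rcases Nat.lt_succ_iff_lt_or_eq.1 hi with hi | rfl
      · have e1 : 2 * i < 2 * M := by omega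
        have e2 : 2 * i + 1 < 2 * M := by omega
        simpa [e1, e2] using h1 i hi
      · simpa using ⟨ha.1.2, hadj, hb.1.2.symm⟩
    · intro j hj
      dsimp only
      split_ifs with h4 h5
      exacts [h2 j h4, ha.1.1, hb.1.1]
    · intro i hi j hj
      have ha' := fun j hj => ha.2 j hj ha.1.1
      have hb' := fun j hj => hb.2 j hj hb.1.1
      dsimp only
      split_ifs with h4 h5 h6 h7 h8 h9 h10 <;> intro heq
      · exact h3 i h4 j h5 heq
      · exact absurd heq.symm (ha' i h4)
      · exact absurd heq.symm (hb' i h4)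
      · exact absurd heq (ha' j h8)
      · omega
      · exact absurd heq hne
      · exact absurd heq (hb' j (by assumption))
      · exact absurd heq.symm hne
      · omega

end Joined

section Hamilton

variable {V : Type*} {G : SimpleGraph V} {m : ℕ}

/-- `l` lists the vertices of a path from `x` to `y` inside `U`. -/
structure IsPathList (G : SimpleGraph V) (U : Finset V) (x y : V) (l : List V) : Prop where
  head : l.head? = some x
  last : l.getLast? = some y
  nodup : l.Nodup
  chain : l.IsChain G.Adj
  subset : ∀ v ∈ l, v ∈ U

variable {U : Finset V} {x y : V} {l : List V}

theorem exists_append_of_lt (l : List V) {i : ℕ} (hi : i + 1 < l.length) :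
    ∃ A C, l = A ++ C ∧ A.length = i + 1 ∧ A.getLast? = some l[i] ∧ C.head? = some l[i + 1] := by
  refine ⟨l.take (i + 1), l.drop (i + 1), (List.take_append_drop _ _).symm, ?_, ?_, ?_⟩
  · simp; omega
  · rw [List.getLast?_take]
    simp [List.getElem?_eq_getElem (show i < l.length by omega)]
  · rw [List.head?_drop]
    simp [hi]

theorem IsPathList.exists_longer_of_insert (h : IsPathList G U x y l) {i : ℕ}
    (hi : i + 1 < l.length)
    {M : List V} (hM : M ≠ []) (hMn : M.Nodup) (hMc : M.IsChain G.Adj) (hMU : ∀ v ∈ M, v ∈ U)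
    (hMl : ∀ v ∈ M, v ∉ l) (h1 : ∀ v ∈ M.head?, G.Adj l[i] v)
    (h2 : ∀ v ∈ M.getLast?, G.Adj v l[i + 1]) :
    ∃ l', IsPathList G U x y l' ∧ l.length < l'.length := by
  obtain ⟨A, C, hl, -, hA, hC⟩ := exists_append_of_lt l hi
  generalize l[i] = p at *
  generalize l[i + 1] = q at *
  clear hi
  subst hl
  obtain ⟨hh, hl, hn, hc, hs⟩ := h
  have hA0 : A ≠ [] := by rintro rfl; simp at hA
  have hC0 : C ≠ [] := by rintro rfl; simp at hC
  rw [List.isChain_append] at hc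
  refine ⟨A ++ (M ++ C), ⟨?_, ?_, ?_, ?_, ?_⟩, ?_⟩
  · rw [List.head?_append_of_ne_nil _ hA0] at hh ⊢
    exact hh
  · rw [← List.append_assoc, List.getLast?_append_of_ne_nil _ hC0]
    rwa [List.getLast?_append_of_ne_nil _ hC0] at hl
  · simp only [List.nodup_append, List.mem_append] at hn hMl ⊢
    grind
  · rw [List.isChain_append, List.isChain_append, List.head?_append_of_ne_nil _ hM]
    refine ⟨hc.1, ⟨hMc, hc.2.1, ?_⟩, ?_⟩
    · simpa [hC] using h2
    · simpa [hA] using h1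
  · intro v hv
    simp only [List.mem_append] at hv hs
    rcases hv with hv | hv | hv
    · exact hs v (Or.inl hv)
    · exact hMU v hv
    · exact hs v (Or.inr hv)
  · have := List.length_pos_of_ne_nil hM
    simp only [List.length_append]
    omega

theorem IsPathList.exists_longer_of_rotate (h : IsPathList G U x y l) {i j : ℕ} (hij : i < j)
    (hj : j + 1 < l.length) {w : V} (hwU : w ∈ U) (hwl : w ∉ l) (h1 : G.Adj w l[i])
    (h2 : G.Adj w l[j]) (h3 : G.Adj l[i + 1] l[j + 1]) :
    ∃ l', IsPathList G U x y l' ∧ l.length < l'.length := by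
  obtain ⟨D, C, hl, hD, hD1, hC⟩ := exists_append_of_lt l hj
  obtain ⟨A, B, hl', hA', hA, hB⟩ := exists_append_of_lt D (i := i) (by omega)
  have e1 : D[i] = l[i] := by simp [hl, List.getElem_append_left (show i < D.length by omega)]
  have e2 : D[i + 1] = l[i + 1] := by
    simp [hl, List.getElem_append_left (show i + 1 < D.length by omega)]
  have hB0 : B ≠ [] := by rintro rfl; simp at hB
  rw [hl', List.getLast?_append_of_ne_nil _ hB0] at hD1
  rw [e1] at hA
  rw [e2] at hB
  generalize l[i] = p at *
  generalize l[i + 1] = p' at *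
  generalize l[j] = q at *
  generalize l[j + 1] = q' at *
  clear hj e1 e2
  subst hl hl'
  obtain ⟨hh, hl, hn, hc, hs⟩ := h
  have hA0 : A ≠ [] := by rintro rfl; simp at hA
  have hC0 : C ≠ [] := by rintro rfl; simp at hC
  have hB0' : B.reverse ≠ [] := by simpa using hB0
  rw [List.append_assoc] at hh hl hc hs hwl
  rw [List.isChain_append, List.isChain_append] at hc
  refine ⟨A ++ (w :: B.reverse ++ C), ⟨?_, ?_, ?_, ?_, ?_⟩, ?_⟩
  · rw [List.head?_append_of_ne_nil _ hA0] at hh ⊢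
    exact hh
  · rw [← List.append_assoc, List.getLast?_append_of_ne_nil _ hC0] at hl ⊢
    exact hl
  · simp only [List.nodup_append, List.mem_append, List.cons_append, List.nodup_cons,
      List.mem_reverse, List.mem_cons, List.nodup_reverse] at hn hwl ⊢
    grind
  · have hBr : B.reverse.IsChain G.Adj := by
      rw [List.isChain_reverse]
      exact hc.2.1.1.imp fun _ _ h => h.symm
    rw [List.isChain_append]
    refine ⟨hc.1, ?_, ?_⟩
    · rw [List.isChain_append, List.isChain_cons]
      refine ⟨⟨?_, hBr⟩, hc.2.1.2.1, ?_⟩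
      · simp [hD1, h2]
      · rw [List.getLast?_cons_of_ne_nil hB0']
        simp [hB, hC, h3]
    · simp [hA, h1.symm]
  · intro v hv
    simp only [List.mem_append, List.mem_cons, List.mem_reverse] at hv hs
    rcases hv with hv | (rfl | hv) | hv
    · exact hs v (Or.inl hv)
    · exact hwU
    · exact hs v (Or.inr (Or.inl hv))
    · exact hs v (Or.inr (Or.inr hv))
  · simp only [List.length_append, List.length_cons, List.length_reverse]
    omega

variable [DecidableEq V] [DecidableRel G.Adj]

/-- A vertex off the path with many neighbours on it can be absorbed by a rotation. -/
theorem IsPathList.exists_longer_of_nbrs (hJ : IsJoined G m) (h : IsPathList G U x y l) {w : V}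
    (hwU : w ∈ U) (hwl : w ∉ l) (hw : 2 * m + 1 ≤ (l.toFinset.filter (G.Adj w)).card) :
    ∃ l', IsPathList G U x y l' ∧ l.length < l'.length := by
  let T : Finset ℕ := (Finset.range (l.length - 1)).filter fun i => G.Adj w (l.getD i x)
  have hT : 2 * m ≤ T.card := by
    have : ((l.toFinset.filter (G.Adj w)).image fun v => l.idxOf v) ⊆
        insert (l.length - 1) T := by
      intro i hi
      simp only [Finset.mem_image, Finset.mem_filter, List.mem_toFinset] at hi
      obtain ⟨v, ⟨hv, hadj⟩, rfl⟩ := hi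
      have := List.idxOf_lt_length_of_mem hv
      simp only [Finset.mem_insert, T, Finset.mem_filter, Finset.mem_range]
      by_cases hlast : l.idxOf v = l.length - 1
      · exact Or.inl hlast
      · refine Or.inr ⟨by omega, ?_⟩
        rwa [List.getD_eq_getElem _ _ this, List.getElem_idxOf]
    have := Finset.card_le_card this
    rw [Finset.card_image_of_injOn] at this
    · have := Finset.card_insert_le (l.length - 1) T
      omega
    · intro a ha b hb hab
      simp only [Finset.coe_filter, List.mem_toFinset, Set.mem_ofPred_eq] at ha hb
      exact (List.idxOf_inj ha.1).1 hab
  let A : Finset V := T.image fun i => l.getD (i + 1) x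
  have hA : A.card = T.card := by
    refine Finset.card_image_of_injOn fun i hi j hj hij => ?_
    simp only [T, Finset.coe_filter, Finset.mem_range, Set.mem_ofPred_eq] at hi hj
    rw [List.getD_eq_getElem _ _ (by omega), List.getD_eq_getElem _ _ (by omega)] at hij
    have := (h.nodup.getElem_inj_iff).1 hij
    omega
  obtain ⟨a, ha, c, hc, hac⟩ := hJ.exists_adj (A := A) (C := A) (by omega) (by omega)
  simp only [A, Finset.mem_image, T, Finset.mem_filter, Finset.mem_range] at ha hc
  obtain ⟨i, ⟨hi, hwi⟩, rfl⟩ := ha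
  obtain ⟨j, ⟨hj, hwj⟩, rfl⟩ := hc
  rw [List.getD_eq_getElem _ _ (by omega)] at hwi hwj
  rw [List.getD_eq_getElem _ _ (by omega), List.getD_eq_getElem _ _ (by omega)] at hac
  rcases lt_trichotomy i j with hlt | rfl | hlt
  · exact h.exists_longer_of_rotate hlt (by omega) hwU hwl hwi hwj hac
  · exact absurd hac (G.loopless.irrefl _)
  · exact h.exists_longer_of_rotate hlt (by omega) hwU hwl hwj hwi hac.symm

theorem IsJoined.exists_connecting_list (hJ : IsJoined G m) {O : Finset V}
    (hO : ∀ w ∈ O, 2 * m + 1 ≤ (O.filter (G.Adj w)).card) {c c' : V} (hc : c ∈ O) (hc' : c' ∈ O) :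
    ∃ M, IsPathList G O c c' M := by
  by_cases hcc : c = c'
  · subst hcc
    exact ⟨[c], by simp, by simp, by simp, by simp, by simpa using hc⟩
  have e1 := Finset.pred_card_le_card_erase (s := O.filter (G.Adj c)) (a := c')
  have e2 := Finset.pred_card_le_card_erase (s := O.filter (G.Adj c')) (a := c)
  have := hO c hc
  have := hO c' hc'
  obtain ⟨a, ha, b, hb, hab⟩ := hJ.exists_adj (A := (O.filter (G.Adj c)).erase c')
    (C := (O.filter (G.Adj c')).erase c) (by omega) (by omega)
  simp only [Finset.mem_erase, Finset.mem_filter] at ha hb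
  refine ⟨[c, a, b, c'], by simp, by simp, ?_, ?_, ?_⟩
  · have := ha.2.2.ne
    have := hb.2.2.ne
    have := hab.ne
    grind
  · simp [ha.2.2, hb.2.2.symm, hab]
  · simp [hc, hc', ha.2.1, hb.2.1]

theorem IsPathList.exists_longer (hJ : IsJoined G m)
    (hU : ∀ v ∈ U, 4 * m + 2 ≤ (U.filter (G.Adj v)).card)
    (hxy : x ≠ y) (h : IsPathList G U x y l) {w : V} (hwU : w ∈ U) (hwl : w ∉ l) :
    ∃ l', IsPathList G U x y l' ∧ l.length < l'.length := by
  by_contra hcon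
  let O := U \ l.toFinset
  have hO : ∀ u ∈ O, 2 * m + 1 ≤ (O.filter (G.Adj u)).card := by
    intro u hu
    simp only [O, Finset.mem_sdiff, List.mem_toFinset] at hu
    have h1 : (l.toFinset.filter (G.Adj u)).card ≤ 2 * m := by
      by_contra h2
      exact hcon (h.exists_longer_of_nbrs hJ hu.1 hu.2 (by omega))
    have h2 := hU u hu.1
    have h3 : U.filter (G.Adj u) ⊆ l.toFinset.filter (G.Adj u) ∪ O.filter (G.Adj u) := by
      intro v
      simp only [Finset.mem_filter, Finset.mem_union, O, Finset.mem_sdiff]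
      tauto
    have h4 := Finset.card_le_card h3
    have h5 := Finset.card_union_le (l.toFinset.filter (G.Adj u)) (O.filter (G.Adj u))
    omega
  have hwO : w ∈ O := by simp [O, hwU, hwl]
  have hOc : 2 * m ≤ O.card := by
    have := hO w hwO
    have := Finset.card_filter_le O (G.Adj w)
    omega
  have hlen : 2 ≤ l.length := by
    have h1 := h.head
    have h2 := h.last
    rcases l with _ | ⟨a, _ | ⟨b, l⟩⟩ <;> simp_all
  -- some two consecutive vertices of the path both have neighbours off it
  have hcons : ∃ i, ∃ hi : i + 1 < l.length, (∃ c ∈ O, G.Adj l[i] c) ∧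
      ∃ c ∈ O, G.Adj c l[i + 1] := by
    by_contra hno
    push Not at hno
    by_cases hlm : l.length ≤ 2 * m
    · have hnb : ∀ v ∈ l, ∃ c ∈ O, G.Adj v c := by
        intro v hv
        by_contra hv'
        push Not at hv'
        have h1 : U.filter (G.Adj v) ⊆ l.toFinset := by
          intro u hu
          rw [Finset.mem_filter] at hu
          by_contra hul
          exact hv' u (Finset.mem_sdiff.2 ⟨hu.1, hul⟩) hu.2
        have := Finset.card_le_card h1
        have := hU v (h.subset v hv)
        have := l.toFinset_card_le
        omega
      obtain ⟨c, hc, hadj⟩ := hnb (l[0 + 1]'(by omega)) (List.getElem_mem _)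
      exact hno 0 (by omega) (hnb _ (List.getElem_mem _)) c hc hadj.symm
    · let g : ℕ → ℕ := fun s => if ∃ c ∈ O, G.Adj (l.getD (2 * s) x) c then 2 * s + 1 else 2 * s
      have hg : ∀ s, g s = 2 * s ∨ g s = 2 * s + 1 := fun s => by simp only [g]; split_ifs <;> simp
      let A : Finset V := (Finset.range m).image fun s => l.getD (g s) x
      have hA : A.card = m := by
        rw [Finset.card_image_of_injOn, Finset.card_range]
        intro i hi j hj hij
        simp only [Finset.coe_range, Set.mem_Iio] at hi hj
        dsimp only at hij
        have h1 := hg i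
        have h2 := hg j
        rw [List.getD_eq_getElem _ _ (by omega), List.getD_eq_getElem _ _ (by omega)] at hij
        have := (h.nodup.getElem_inj_iff).1 hij
        omega
      obtain ⟨a, ha, c, hc, hac⟩ := hJ.exists_adj (A := A) (C := O) hA.ge hOc
      simp only [A, Finset.mem_image, Finset.mem_range] at ha
      obtain ⟨s, hs, rfl⟩ := ha
      by_cases hs' : ∃ c ∈ O, G.Adj (l.getD (2 * s) x) c
      · simp only [g, if_pos hs'] at hac
        rw [List.getD_eq_getElem _ _ (by omega)] at hac
        rw [List.getD_eq_getElem _ _ (by omega)] at hs'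
        exact hno (2 * s) (by omega) hs' c hc hac.symm
      · simp only [g, if_neg hs'] at hac
        exact hs' ⟨c, hc, hac⟩
  obtain ⟨i, hi, ⟨c, hc, h1⟩, c', hc', h2⟩ := hcons
  obtain ⟨M, hM⟩ := hJ.exists_connecting_list hO hc hc'
  refine hcon (h.exists_longer_of_insert hi (M := M)
    (fun h0 => by simpa [h0] using hM.head) hM.nodup hM.chain
    (fun v hv => (Finset.mem_sdiff.1 (hM.subset v hv)).1)
    (fun v hv => by simpa using (Finset.mem_sdiff.1 (hM.subset v hv)).2) ?_ ?_)
  · simpa [hM.head] using h1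
  · simpa [hM.last] using h2

/-- In a joined graph, a vertex set inducing large minimum degree is Hamilton-connected. -/
theorem IsJoined.exists_hamilton_list (hJ : IsJoined G m)
    (hU : ∀ v ∈ U, 4 * m + 2 ≤ (U.filter (G.Adj v)).card) (hx : x ∈ U) (hy : y ∈ U)
    (hxy : x ≠ y) : ∃ l, IsPathList G U x y l ∧ ∀ v ∈ U, v ∈ l := by
  obtain ⟨l, hl⟩ := hJ.exists_connecting_list (fun w hw => by have := hU w hw; omega) hx hy
  induction hn : U.card - l.length using Nat.strong_induction_on generalizing l with
  | _ n ih =>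
    by_contra hcon
    have hw : ∃ w ∈ U, w ∉ l := by
      by_contra! h
      exact hcon ⟨l, hl, h⟩
    obtain ⟨w, hwU, hwl⟩ := hw
    obtain ⟨l', hl', hlt⟩ := hl.exists_longer hJ hU hxy hwU hwl
    have hle : l'.length ≤ U.card := by
      rw [← List.toFinset_card_of_nodup hl'.nodup]
      exact Finset.card_le_card fun v hv => hl'.subset v (List.mem_toFinset.1 hv)
    exact hcon (ih _ (by omega) l' hl' rfl)

end Hamilton

section Spine

variable {V : Type*} {G : SimpleGraph V} {m : ℕ}

/-- The vertex `z` occurs in `l` strictly between two adjacent vertices. -/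
def HasShortcut (G : SimpleGraph V) (l : List V) (z : V) : Prop :=
  ∃ X u v Y, l = X ++ u :: z :: v :: Y ∧ G.Adj u v

theorem HasShortcut.append_right {l : List V} {z : V} (h : HasShortcut G l z) (l' : List V) :
    HasShortcut G (l ++ l') z := by
  obtain ⟨X, u, v, Y, rfl, hadj⟩ := h
  exact ⟨X, u, v, Y ++ l', by simp, hadj⟩

theorem HasShortcut.mem {l : List V} {z : V} (h : HasShortcut G l z) : z ∈ l := by
  obtain ⟨X, u, v, Y, rfl, hadj⟩ := h
  simp

variable [DecidableEq V] [DecidableRel G.Adj]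

theorem card_filter_sdiff_ge {W T : Finset V} (p : V → Prop) [DecidablePred p] :
    (W.filter p).card ≤ ((W \ T).filter p).card + T.card := by
  refine (Finset.card_le_card (t := (W \ T).filter p ∪ T) ?_).trans (Finset.card_union_le _ _)
  intro v
  simp only [Finset.mem_filter, Finset.mem_union, Finset.mem_sdiff]
  tauto

/-- In a joined graph a prescribed set `Z` can be threaded onto a short path so that each of its
vertices can be bypassed. -/
theorem IsJoined.exists_shortcut_list (hJ : IsJoined G m) {W Z : Finset V} (hZ : Z ⊆ W)
    (hW : ∀ v ∈ W, 6 * Z.card + 2 * m + 3 ≤ (W.filter (G.Adj v)).card) (hne : W.Nonempty) :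
    ∃ Q e, IsPathList G W e (Q.getLastD e) Q ∧ Q.length = 5 * Z.card + 1 ∧
      ∀ z ∈ Z, HasShortcut G Q z := by
  suffices h : ∀ Z' ⊆ Z, ∃ Q x e, IsPathList G W x e Q ∧ Q.length = 5 * Z'.card + 1 ∧
      (∀ z ∈ Z', HasShortcut G Q z) ∧ ∀ z ∈ Z, z ∈ Q → z ∈ Z' by
    obtain ⟨Q, x, e, h1, h2, h3, -⟩ := h Z subset_rfl
    refine ⟨Q, x, ?_, h2, h3⟩
    have : Q.getLastD x = e := by
      rw [List.getLastD_eq_getLast?, h1.last]; rfl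
    rwa [this]
  intro Z' hZ'
  induction Z' using Finset.induction_on with
  | empty =>
    obtain ⟨w, hw⟩ := hne
    have h1 := hW w hw
    have h2 := card_filter_sdiff_ge (W := W) (T := Z) (G.Adj w)
    obtain ⟨e, he⟩ : ((W \ Z).filter (G.Adj w)).Nonempty := by
      rw [← Finset.card_pos]; omega
    simp only [Finset.mem_filter, Finset.mem_sdiff] at he
    refine ⟨[e], e, e, ⟨by simp, by simp, by simp, by simp, by simp [he.1.1]⟩, by simp, by simp, ?_⟩
    rintro z hz h
    simp only [List.mem_singleton] at h
    exact absurd (h ▸ hz) he.1.2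
  | insert z Z' hz ih =>
    obtain ⟨Q, x, e, hQ, hlen, hsc, hnew⟩ := ih fun v hv => hZ' (Finset.mem_insert_of_mem hv)
    have hzZ : z ∈ Z := hZ' (Finset.mem_insert_self _ _)
    have hcard := Finset.card_le_card hZ'
    rw [Finset.card_insert_of_notMem hz] at hcard
    let F := W \ (Z ∪ Q.toFinset)
    have hF : ∀ v ∈ W, 2 * m + 2 ≤ (F.filter (G.Adj v)).card := by
      intro v hv
      have h1 := hW v hv
      have h2 := card_filter_sdiff_ge (W := W) (T := Z ∪ Q.toFinset) (G.Adj v)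
      have h3 := Finset.card_union_le Z Q.toFinset
      have h4 := Q.toFinset_card_le
      change 2 * m + 2 ≤ ((W \ (Z ∪ Q.toFinset)).filter (G.Adj v)).card
      omega
    have hFm : ∀ v, v ∈ F ↔ v ∈ W ∧ v ∉ Z ∧ v ∉ Q := by simp [F]
    have hF' : ∀ v ∈ W, ∀ u u', 2 * m ≤ (((F.filter (G.Adj v)).erase u).erase u').card := by
      intro v hv u u'
      have := hF v hv
      have h1 := Finset.pred_card_le_card_erase (s := F.filter (G.Adj v)) (a := u)
      have h2 := Finset.pred_card_le_card_erase (s := (F.filter (G.Adj v)).erase u) (a := u')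
      omega
    have heW : e ∈ W := hQ.subset e (List.mem_of_getLast? hQ.last)
    have hzW := hZ hzZ
    have hzQ : z ∉ Q := fun h => hz (hnew z hzZ h)
    obtain ⟨u, hu, v, hv, huv⟩ := hJ.exists_adj (A := F.filter (G.Adj z))
      (C := F.filter (G.Adj z)) (by have := hF z hzW; omega) (by have := hF z hzW; omega)
    simp only [Finset.mem_filter, hFm] at hu hv
    obtain ⟨a, ha, b, hb, hab⟩ := hJ.exists_adj (A := ((F.filter (G.Adj e)).erase u).erase v)
      (C := ((F.filter (G.Adj u)).erase u).erase v) (by have := hF' e heW u v; omega)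
      (hF' u hu.1.1 u v)
    simp only [Finset.mem_filter, Finset.mem_erase, hFm] at ha hb
    have hab' := hab.ne
    have huv' := huv.ne
    refine ⟨Q ++ [a, b, u, z, v], x, v, ⟨?_, ?_, ?_, ?_, ?_⟩, ?_, ?_, ?_⟩
    · have : Q ≠ [] := by rintro rfl; simp at hlen
      rw [List.head?_append_of_ne_nil _ this, hQ.head]
    · simp
    · rw [List.nodup_append]
      refine ⟨hQ.nodup, ?_, ?_⟩
      · have : a ≠ z := by rintro rfl; exact ha.2.2.1.2.1 hzZ
        have : b ≠ z := by rintro rfl; exact hb.2.2.1.2.1 hzZ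
        have := hu.2.ne
        have := hv.2.ne
        simp only [List.nodup_cons, List.mem_cons, List.not_mem_nil, or_false, not_or]
        tauto
      · intro c hc d hd
        simp only [List.mem_cons, List.not_mem_nil, or_false] at hd
        rintro rfl
        rcases hd with rfl | rfl | rfl | rfl | rfl <;> tauto
    · rw [List.isChain_append]
      refine ⟨hQ.chain, ?_, ?_⟩
      · simp [hab, hb.2.2.2.symm, hu.2.symm, hv.2]
      · simp [hQ.last, ha.2.2.2]
    · intro c hc
      simp only [List.mem_append, List.mem_cons, List.not_mem_nil, or_false] at hc
      rcases hc with hc | rfl | rfl | rfl | rfl | rfl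
      · exact hQ.subset _ hc
      all_goals tauto
    · rw [Finset.card_insert_of_notMem hz]
      simp [hlen]
      ring
    · intro c hc
      rw [Finset.mem_insert] at hc
      rcases hc with rfl | hc
      · exact ⟨Q ++ [a, b], u, v, [], by simp, huv⟩
      · exact (hsc c hc).append_right _
    · intro c hc hcQ
      simp only [List.mem_append, List.mem_cons, List.not_mem_nil, or_false] at hcQ
      rw [Finset.mem_insert]
      rcases hcQ with hcQ | rfl | rfl | rfl | rfl | rfl
      · exact Or.inr (hnew c hc hcQ)
      all_goals tauto

/-- A vertex set `W` inducing large minimum degree is spanned by a path that starts with a short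
segment in which every vertex of `Z` can be bypassed. -/
theorem IsJoined.exists_spanning_list (hJ : IsJoined G m) {W Z : Finset V} (hZ : Z ⊆ W)
    (hW : ∀ v ∈ W, 6 * Z.card + 4 * m + 4 ≤ (W.filter (G.Adj v)).card) (hne : W.Nonempty) :
    ∃ Q R : List V, (Q ++ R).Nodup ∧ (Q ++ R).IsChain G.Adj ∧ (∀ v, v ∈ Q ++ R ↔ v ∈ W) ∧
      Q.length = 5 * Z.card + 1 ∧ ∀ z ∈ Z, HasShortcut G Q z := by
  obtain ⟨Q, x, hQ, hlen, hsc⟩ := hJ.exists_shortcut_list hZ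
    (fun v hv => by have := hW v hv; omega) hne
  generalize Q.getLastD x = e at hQ
  have heW : e ∈ W := hQ.subset e (List.mem_of_getLast? hQ.last)
  have hF : ∀ v ∈ W, 4 * m + 2 ≤ ((W \ Q.toFinset).filter (G.Adj v)).card := by
    intro v hv
    have h1 := hW v hv
    have h2 := card_filter_sdiff_ge (W := W) (T := Q.toFinset) (G.Adj v)
    have h4 := Q.toFinset_card_le
    omega
  obtain ⟨a, ha, b, hb, hab⟩ := Finset.one_lt_card.1 (lt_of_lt_of_le (by omega) (hF e heW))
  simp only [Finset.mem_filter] at ha hb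
  obtain ⟨R, hR, hR'⟩ := hJ.exists_hamilton_list (U := W \ Q.toFinset)
    (fun v hv => hF v (Finset.mem_sdiff.1 hv).1) ha.1 hb.1 hab
  have hRm : ∀ v, v ∈ R ↔ v ∈ W ∧ v ∉ Q := fun v =>
    ⟨fun h => by simpa using hR.subset v h, fun h => hR' v (by simpa using h)⟩
  refine ⟨Q, R, ?_, ?_, ?_, hlen, hsc⟩
  · rw [List.nodup_append]
    refine ⟨hQ.nodup, hR.nodup, ?_⟩
    rintro c hc _ hd rfl
    exact ((hRm c).1 hd).2 hc
  · rw [List.isChain_append]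
    refine ⟨hQ.chain, hR.chain, ?_⟩
    simp [hQ.last, hR.head, ha.2]
  · intro v
    rw [List.mem_append, hRm]
    refine ⟨fun h => h.elim (hQ.subset v) And.left, fun h => ?_⟩
    by_cases hv : v ∈ Q <;> tauto

end Spine

section RandomClass

variable {V : Type*} [Fintype V] [DecidableEq V]

theorem sum_half_pow_card_fiber (N : Finset V) {q : ℕ} (i : Fin q) :
    ∑ f : V → Fin q, (1 / 2 : ℝ) ^ (N.filter (f · = i)).card
      = q ^ (Fintype.card V - N.card) * (q - 1 / 2 : ℝ) ^ N.card := by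
  have h1 : ∀ f : V → Fin q, (1 / 2 : ℝ) ^ (N.filter (f · = i)).card
      = ∏ u : V, (if u ∈ N ∧ f u = i then (1 / 2 : ℝ) else 1) := by
    intro f
    rw [← Finset.prod_filter, Finset.prod_const]
    congr 2
    ext u
    simp
  simp_rw [h1]
  have h3 := Finset.prod_univ_sum (fun _ : V => (Finset.univ : Finset (Fin q)))
    (fun u j => if u ∈ N ∧ j = i then (1 / 2 : ℝ) else 1)
  rw [Fintype.piFinset_univ] at h3
  rw [← h3]
  have h2 : ∀ u : V, (∑ j : Fin q, if u ∈ N ∧ j = i then (1 / 2 : ℝ) else 1)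
      = if u ∈ N then (q - 1 / 2 : ℝ) else q := by
    intro u
    by_cases hu : u ∈ N
    · have : ∀ j : Fin q, (if u ∈ N ∧ j = i then (1 / 2 : ℝ) else 1)
          = 1 - if j = i then 1 / 2 else 0 := by
        intro j
        by_cases hj : j = i <;> simp [hu, hj]
        norm_num
      simp_rw [this]
      simp [hu]
    · simp [hu]
  simp_rw [h2]
  rw [Finset.prod_ite, Finset.prod_const, Finset.prod_const, mul_comm]
  congr 2
  · rw [Finset.filter_not, Finset.card_sdiff_of_subset (Finset.filter_subset _ _)]
    simp
  · simp

/-- Among `q` random classes, some class is small and meets every member of a family of large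
sets in roughly the expected proportion. -/
theorem exists_small_hitting_set (N : V → Finset V) {q x : ℕ} (hq : 0 < q)
    (hN : ∀ v, 4 * q * x ≤ (N v).card) (hx : Fintype.card V * q < 2 ^ x) :
    ∃ S : Finset V, S.card * q ≤ Fintype.card V ∧ ∀ v, x ≤ (N v ∩ S).card := by
  have hq0 : (0 : ℝ) < q := by exact_mod_cast hq
  have hq1 : (1 : ℝ) ≤ q := by exact_mod_cast hq
  set n := Fintype.card V with hn
  have hterm : ∀ v (i : Fin q), ∑ f : V → Fin q, (1 / 2 : ℝ) ^ ((N v).filter (f · = i)).card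
      ≤ q ^ n * (1 / 4) ^ x := by
    intro v i
    rw [sum_half_pow_card_fiber]
    have hle : (N v).card ≤ n := Finset.card_le_univ _
    have e1 : (q - 1 / 2 : ℝ) = q * (1 - 1 / (2 * q)) := by field_simp
    have h0 : (0 : ℝ) ≤ 1 - 1 / (2 * q) := by
      rw [sub_nonneg, div_le_one (by positivity)]; linarith
    have h1 : (1 - 1 / (2 * q) : ℝ) ≤ 1 := by
      have : (0 : ℝ) ≤ 1 / (2 * q) := by positivity
      linarith
    have h2 : (1 - 1 / (2 * q) : ℝ) ^ (2 * q) ≤ 1 / 2 := by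
      have h3 : (1 - 1 / (2 * q) : ℝ) ≤ Real.exp (-(1 / (2 * q))) := by
        have := Real.add_one_le_exp (-(1 / (2 * q : ℝ)))
        linarith
      calc (1 - 1 / (2 * q) : ℝ) ^ (2 * q) ≤ Real.exp (-(1 / (2 * q))) ^ (2 * q) :=
            pow_le_pow_left₀ h0 h3 _
        _ = Real.exp (-1) := by
            rw [← Real.exp_nat_mul]
            congr 1
            push_cast
            field_simp
        _ ≤ 1 / 2 := by
            rw [Real.exp_neg, inv_eq_one_div]
            have := Real.add_one_le_exp (1 : ℝ)
            exact one_div_le_one_div_of_le (by norm_num) (by linarith)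
    rw [e1, mul_pow, ← mul_assoc, ← pow_add, Nat.sub_add_cancel hle]
    refine mul_le_mul_of_nonneg_left ?_ (by positivity)
    calc (1 - 1 / (2 * q) : ℝ) ^ (N v).card ≤ (1 - 1 / (2 * q) : ℝ) ^ (2 * q * (2 * x)) :=
          pow_le_pow_of_le_one h0 h1 (by have := hN v; nlinarith)
      _ ≤ (1 / 2) ^ (2 * x) := by
          rw [pow_mul]
          exact pow_le_pow_left₀ (by positivity) h2 _
      _ = (1 / 4) ^ x := by rw [pow_mul]; norm_num
  have hcard : (Finset.univ : Finset (V → Fin q)).card = q ^ n := by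
    simp [Finset.card_univ, hn]
  obtain ⟨f, hf⟩ : ∃ f : V → Fin q,
      ∑ v : V, ∑ i : Fin q, (1 / 2 : ℝ) ^ ((N v).filter (f · = i)).card ≤ n * q * (1 / 4) ^ x := by
    have : Nonempty (Fin q) := ⟨⟨0, hq⟩⟩
    by_contra! hcon
    have h1 := Finset.sum_lt_sum_of_nonempty (Finset.univ_nonempty (α := V → Fin q))
      fun f _ => hcon f
    rw [Finset.sum_const, hcard, nsmul_eq_mul, Finset.sum_comm] at h1
    have h2 : ∑ v : V, ∑ f : V → Fin q, ∑ i : Fin q,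
        (1 / 2 : ℝ) ^ ((N v).filter (f · = i)).card ≤ ∑ _v : V, ∑ _i : Fin q,
          (q ^ n * (1 / 4) ^ x : ℝ) := by
      refine Finset.sum_le_sum fun v _ => ?_
      rw [Finset.sum_comm]
      exact Finset.sum_le_sum fun i _ => hterm v i
    simp only [Finset.sum_const, Finset.card_univ, Fintype.card_fin, nsmul_eq_mul, ← hn] at h2
    push_cast at h1
    nlinarith
  have hlarge : ∀ v i, x ≤ ((N v).filter (f · = i)).card := by
    intro v i
    by_contra! hlt
    have h1 : (1 / 2 : ℝ) ^ ((N v).filter (f · = i)).card ≤ n * q * (1 / 4) ^ x :=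
      (Finset.single_le_sum (f := fun i => (1 / 2 : ℝ) ^ ((N v).filter (f · = i)).card)
        (fun _ _ => by positivity) (Finset.mem_univ i)).trans
        ((Finset.single_le_sum
          (f := fun v => ∑ i : Fin q, (1 / 2 : ℝ) ^ ((N v).filter (f · = i)).card)
          (fun _ _ => Finset.sum_nonneg fun _ _ => by positivity) (Finset.mem_univ v)).trans hf)
    have h2 : (1 / 2 : ℝ) ^ x ≤ (1 / 2 : ℝ) ^ ((N v).filter (f · = i)).card :=
      pow_le_pow_of_le_one (by norm_num) (by norm_num) hlt.le
    have h3 : (n * q : ℝ) < 2 ^ x := by exact_mod_cast hx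
    have h4 : (n * q * (1 / 4) ^ x : ℝ) < 2 ^ x * (1 / 4) ^ x :=
      mul_lt_mul_of_pos_right h3 (by positivity)
    rw [← mul_pow] at h4
    norm_num at h4 h1 h2
    linarith
  obtain ⟨i, hi⟩ : ∃ i : Fin q, (Finset.univ.filter (f · = i)).card * q ≤ n := by
    by_contra! hcon
    have : Nonempty (Fin q) := ⟨⟨0, hq⟩⟩
    have h1 := Finset.sum_lt_sum_of_nonempty (Finset.univ_nonempty (α := Fin q))
      fun i _ => hcon i
    rw [← Finset.sum_mul, ← Finset.card_eq_sum_card_fiberwise (fun _ _ => Finset.mem_univ _)] at h1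
    simp [hn, mul_comm] at h1
  refine ⟨Finset.univ.filter (f · = i), hi, fun v => (hlarge v i).trans ?_⟩
  exact Finset.card_le_card fun u => by simp

end RandomClass

section Piece

variable {V : Type*} {G : SimpleGraph V}

/-- The `r`-th piece when `l` is cut into consecutive pieces of lengths `d 0, d 1, …`. -/
def listPiece (l : List V) (d : ℕ → ℕ) (r : ℕ) : List V :=
  (l.drop (∑ i ∈ Finset.range r, d i)).take (d r)

theorem listPiece_isInfix (l : List V) (d : ℕ → ℕ) (r : ℕ) : listPiece l d r <:+: l :=
  ⟨l.take (∑ i ∈ Finset.range r, d i), (l.drop (∑ i ∈ Finset.range r, d i)).drop (d r), by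
    rw [listPiece, List.append_assoc, List.take_append_drop, List.take_append_drop]⟩

theorem length_listPiece {l : List V} {d : ℕ → ℕ} {k r : ℕ} (hr : r < k)
    (h : ∑ i ∈ Finset.range k, d i ≤ l.length) : (listPiece l d r).length = d r := by
  have : ∑ i ∈ Finset.range (r + 1), d i ≤ ∑ i ∈ Finset.range k, d i :=
    Finset.sum_le_sum_of_subset (Finset.range_subset_range.2 hr)
  rw [Finset.sum_range_succ] at this
  simp only [listPiece, List.length_take, List.length_drop]
  omega

theorem mem_take_iff_exists_mem_listPiece (l : List V) (d : ℕ → ℕ) (k : ℕ) (v : V) :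
    v ∈ l.take (∑ i ∈ Finset.range k, d i) ↔ ∃ r < k, v ∈ listPiece l d r := by
  induction k with
  | zero => simp
  | succ k ih =>
    rw [Finset.sum_range_succ, List.take_add, List.mem_append, ih]
    constructor
    · rintro (⟨r, hr, h⟩ | h)
      · exact ⟨r, by omega, h⟩
      · exact ⟨k, by omega, h⟩
    · rintro ⟨r, hr, h⟩
      rcases Nat.lt_succ_iff_lt_or_eq.1 hr with hr | rfl
      · exact Or.inl ⟨r, hr, h⟩
      · exact Or.inr h

theorem eq_of_mem_listPiece {l : List V} (hl : l.Nodup) {d : ℕ → ℕ} {r r' : ℕ} {v : V}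
    (h : v ∈ listPiece l d r) (h' : v ∈ listPiece l d r') : r = r' := by
  wlog hlt : r < r' generalizing r r'
  · rcases (not_lt.1 hlt).lt_or_eq with hlt' | heq
    · exact (this h' h hlt').symm
    · exact heq.symm
  have h1 := (mem_take_iff_exists_mem_listPiece l d r' v).2 ⟨r, hlt, h⟩
  exact (List.disjoint_take_drop hl le_rfl h1 (List.mem_of_mem_take h')).elim

theorem head?_listPiece_zero {l : List V} {d : ℕ → ℕ} (h : d 0 ≠ 0) :
    (listPiece l d 0).head? = l.head? := by
  simp [listPiece, List.head?_take, h]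

theorem getLast?_listPiece_last {l : List V} {d : ℕ → ℕ} {k : ℕ}
    (h : ∑ i ∈ Finset.range (k + 1), d i = l.length) (hd : d k ≠ 0) :
    (listPiece l d k).getLast? = l.getLast? := by
  rw [Finset.sum_range_succ] at h
  rw [listPiece, List.take_of_length_le (by simp; omega), List.getLast?_drop, if_neg (by omega)]

theorem HasShortcut.of_isInfix {l P : List V} (hl : l.Nodup) (hP : P <:+: l) {z : V}
    (h : HasShortcut G l z) (hz : z ∈ P) (hh : P.head? ≠ some z) (ht : P.getLast? ≠ some z) :
    HasShortcut G P z := by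
  obtain ⟨A, C, hAC⟩ := hP
  obtain ⟨X', Y', rfl⟩ := List.append_of_mem hz
  obtain ⟨X, u, v, Y, rfl, hadj⟩ := h
  rcases List.eq_nil_or_concat X' with rfl | ⟨X'', u', rfl⟩
  · simp at hh
  rcases Y' with _ | ⟨v', Y''⟩
  · simp at ht
  have heq : (A ++ (X'' ++ [u'])) ++ z :: (v' :: Y'' ++ C) = (X ++ [u]) ++ z :: (v :: Y) := by
    simpa using hAC
  have hn : ((X ++ [u]) ++ z :: (v :: Y)).Nodup := by simpa using hl
  have hn' := heq ▸ hn
  have h1 : z ∉ A ++ (X'' ++ [u']) := by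
    rw [List.nodup_append] at hn'
    exact fun hz => hn'.2.2 z hz z (by simp) rfl
  have h2 : z ∉ v' :: Y'' ++ C := by
    rw [List.nodup_append, List.nodup_cons] at hn'
    exact hn'.2.1.1
  obtain ⟨e1, e2⟩ := (List.append_cons_inj_of_notMem h1 h2).1 heq
  rw [← List.append_assoc] at e1
  have e3 := List.append_inj_right' e1 rfl
  simp only [List.cons_append, List.cons.injEq, true_and, and_true] at e2 e3
  refine ⟨X'', u', v', Y'', by simp, ?_⟩
  have e4 : v' = v := e2.1
  rw [e3, e4]
  exact hadj

theorem HasShortcut.exists_bypass {P : List V} (hP : P.Nodup) (hc : P.IsChain G.Adj) {z : V}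
    (h : HasShortcut G P z) : ∃ F : List V, F.head? = P.head? ∧ F.getLast? = P.getLast? ∧
      F.Nodup ∧ F.IsChain G.Adj ∧ F.length + 1 = P.length ∧ ∀ v, v ∈ F ↔ v ∈ P ∧ v ≠ z := by
  obtain ⟨X, u, v, Y, rfl, hadj⟩ := h
  rw [List.isChain_append] at hc
  refine ⟨X ++ u :: v :: Y, by cases X <;> simp, by simp, ?_, ?_, by simp; omega, ?_⟩
  · refine hP.sublist ?_
    simp
  · rw [List.isChain_append]
    refine ⟨hc.1, ?_, by simpa using hc.2.2⟩
    have := hc.2.1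
    simp only [List.isChain_cons_cons] at this ⊢
    exact ⟨hadj, this.2.2⟩
  · intro c
    simp only [List.nodup_append, List.nodup_cons, List.mem_cons, not_or] at hP
    simp only [List.mem_append, List.mem_cons]
    grind

end Piece

section Assembly

variable {V : Type*} {G : SimpleGraph V}

/-- `I 0, …, I (k - 1)` list the interiors of internally disjoint paths from `s r` to `s' r`
that cover everything outside `B`. -/
structure IsLinkage (G : SimpleGraph V) (B : Finset V) (s s' : ℕ → V) (k : ℕ)
    (I : ℕ → List V) : Prop where
  chain : ∀ r < k, (s r :: (I r ++ [s' r])).IsChain G.Adj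
  nodup : ∀ r < k, (I r).Nodup
  disj : ∀ r < k, ∀ r' < k, ∀ v, v ∈ I r → v ∈ I r' → r = r'
  cover : ∀ v, (∃ r < k, v ∈ I r) ↔ v ∉ B

/-- Pieces together with four linking vertices for each piece, some of which are taken from pieces
where they can be bypassed, form a linkage. -/
theorem exists_isLinkage {B : Finset V} {s s' hd tl : ℕ → V} {k : ℕ} {P : ℕ → List V}
    {h : ℕ → V} (hhd : ∀ r < k, (P r).head? = some (hd r))
    (htl : ∀ r < k, (P r).getLast? = some (tl r)) (hPc : ∀ r < k, (P r).IsChain G.Adj)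
    (hPn : ∀ r < k, (P r).Nodup) (hPd : ∀ r < k, ∀ r' < k, ∀ v, v ∈ P r → v ∈ P r' → r = r')
    (hPB : ∀ r < k, ∀ v ∈ P r, v ∉ B) (hhB : ∀ j < 4 * k, h j ∉ B)
    (hinj : ∀ i < 4 * k, ∀ j < 4 * k, h i = h j → i = j)
    (hl : ∀ r < k, G.Adj (s r) (h (4 * r)) ∧ G.Adj (h (4 * r)) (h (4 * r + 1)) ∧
      G.Adj (h (4 * r + 1)) (hd r))
    (hr : ∀ r < k, G.Adj (tl r) (h (4 * r + 2)) ∧ G.Adj (h (4 * r + 2)) (h (4 * r + 3)) ∧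
      G.Adj (h (4 * r + 3)) (s' r))
    (hone : ∀ r < k, ∀ i < 4 * k, ∀ j < 4 * k, h i ∈ P r → h j ∈ P r → i = j)
    (hsc : ∀ r < k, ∀ j < 4 * k, h j ∈ P r → HasShortcut G (P r) (h j))
    (hcov : ∀ v, v ∉ B → (∃ r < k, v ∈ P r) ∨ ∃ j < 4 * k, v = h j) :
    ∃ I, IsLinkage G B s s' k I ∧
      ∀ r < k, (I r).length ≤ (P r).length + 4 ∧ (P r).length + 3 ≤ (I r).length := by
  have hF : ∀ r, ∃ F : List V, r < k → F.head? = some (hd r) ∧ F.getLast? = some (tl r) ∧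
      F.Nodup ∧ F.IsChain G.Adj ∧ F.length ≤ (P r).length ∧ (P r).length ≤ F.length + 1 ∧
      ∀ v, v ∈ F ↔ v ∈ P r ∧ ∀ j < 4 * k, v ≠ h j := by
    intro r
    by_cases hrk : r < k
    swap
    · exact ⟨[], fun h => absurd h hrk⟩
    by_cases hex : ∃ j < 4 * k, h j ∈ P r
    · obtain ⟨j, hj, hjr⟩ := hex
      obtain ⟨F, h1, h2, h3, h4, h5, h6⟩ := (hsc r hrk j hj hjr).exists_bypass (hPn r hrk)
        (hPc r hrk)
      refine ⟨F, fun _ => ⟨h1.trans (hhd r hrk), h2.trans (htl r hrk), h3, h4, by omega,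
        by omega, fun v => ?_⟩⟩
      rw [h6]
      refine ⟨fun hv => ⟨hv.1, fun i hi hvi => hv.2 ?_⟩, fun hv => ⟨hv.1, hv.2 j hj⟩⟩
      rw [hvi, hone r hrk i hi j hj (hvi ▸ hv.1) hjr]
    · push Not at hex
      refine ⟨P r, fun _ => ⟨hhd r hrk, htl r hrk, hPn r hrk, hPc r hrk, le_rfl, by omega,
        fun v => ⟨fun hv => ⟨hv, ?_⟩, And.left⟩⟩⟩
      rintro j hj rfl
      exact hex j hj hv
  choose F hF using hF
  let I : ℕ → List V := fun r =>
    h (4 * r) :: h (4 * r + 1) :: (F r ++ [h (4 * r + 2), h (4 * r + 3)])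
  have hImem : ∀ r < k, ∀ v, v ∈ I r ↔ v ∈ F r ∨ ∃ i < 4, v = h (4 * r + i) := by
    intro r hrk v
    have : (∃ i < 4, v = h (4 * r + i)) ↔
        v = h (4 * r) ∨ v = h (4 * r + 1) ∨ v = h (4 * r + 2) ∨ v = h (4 * r + 3) := by
      constructor
      · rintro ⟨i, hi, hv⟩
        have : i = 0 ∨ i = 1 ∨ i = 2 ∨ i = 3 := by omega
        rcases this with rfl | rfl | rfl | rfl
        exacts [Or.inl hv, Or.inr (Or.inl hv), Or.inr (Or.inr (Or.inl hv)),
          Or.inr (Or.inr (Or.inr hv))]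
      · rintro (hv | hv | hv | hv)
        exacts [⟨0, by omega, hv⟩, ⟨1, by omega, hv⟩, ⟨2, by omega, hv⟩, ⟨3, by omega, hv⟩]
    rw [this]
    simp only [I, List.mem_cons, List.mem_append, List.not_mem_nil, or_false]
    tauto
  have hFh : ∀ r < k, ∀ j < 4 * k, h j ∉ F r := fun r hrk j hj hmem =>
    (((hF r hrk).2.2.2.2.2.2 _).1 hmem).2 j hj rfl
  refine ⟨I, ⟨?_, ?_, ?_, ?_⟩, ?_⟩
  · intro r hrk
    obtain ⟨h1, h2, -, h4, -⟩ := hF r hrk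
    obtain ⟨l1, l2, l3⟩ := hl r hrk
    obtain ⟨r1, r2, r3⟩ := hr r hrk
    have hne : F r ≠ [] := by intro h0; simp [h0] at h1
    simp only [I, List.cons_append, List.isChain_cons_cons]
    refine ⟨l1, l2, ?_⟩
    rw [List.append_assoc, List.isChain_cons, List.head?_append_of_ne_nil _ hne,
      List.isChain_append]
    refine ⟨by simpa [h1] using l3, h4, by simp [r2, r3], by simpa [h2] using r1⟩
  · intro r hrk
    have hne : ∀ i < 4, ∀ j < 4, i ≠ j → h (4 * r + i) ≠ h (4 * r + j) := by
      intro i hi j hj hij heq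
      have := hinj _ (by omega) _ (by omega) heq
      omega
    have n0 := hFh r hrk (4 * r) (by omega)
    have n1 := hFh r hrk (4 * r + 1) (by omega)
    have n2 := hFh r hrk (4 * r + 2) (by omega)
    have n3 := hFh r hrk (4 * r + 3) (by omega)
    have e1 := hne 0 (by omega) 1 (by omega) (by omega)
    have e2 := hne 0 (by omega) 2 (by omega) (by omega)
    have e3 := hne 0 (by omega) 3 (by omega) (by omega)
    have e4 := hne 1 (by omega) 2 (by omega) (by omega)
    have e5 := hne 1 (by omega) 3 (by omega) (by omega)
    have e6 := hne 2 (by omega) 3 (by omega) (by omega)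
    rw [add_zero] at e1 e2 e3
    simp only [I, List.nodup_cons, List.mem_cons, List.mem_append, List.nodup_append,
      List.not_mem_nil, or_false, not_or, not_false_eq_true, List.nodup_nil, and_true]
    refine ⟨⟨e1, n0, e2, e3⟩, ⟨n1, e4, e5⟩, (hF r hrk).2.2.1, e6, ?_⟩
    rintro v hv _ (rfl | rfl) rfl
    exacts [n2 hv, n3 hv]
  · intro r hrk r' hrk' v hv hv'
    rw [hImem r hrk] at hv
    rw [hImem r' hrk'] at hv'
    rcases hv with hv | ⟨i, hi, rfl⟩ <;> rcases hv' with hv' | ⟨i', hi', hv'⟩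
    · exact hPd r hrk r' hrk' v (((hF r hrk).2.2.2.2.2.2 _).1 hv).1
        (((hF r' hrk').2.2.2.2.2.2 _).1 hv').1
    · exact absurd (hv' ▸ hv) (hFh r hrk _ (by omega))
    · exact absurd hv' (hFh r' hrk' _ (by omega))
    · have := hinj _ (by omega) _ (by omega) hv'
      omega
  · intro v
    constructor
    · rintro ⟨r, hrk, hv⟩
      rcases (hImem r hrk v).1 hv with hv | ⟨i, hi, rfl⟩
      · exact hPB r hrk v (((hF r hrk).2.2.2.2.2.2 _).1 hv).1
      · exact hhB _ (by omega)
    · intro hv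
      by_cases hex : ∃ j < 4 * k, v = h j
      · obtain ⟨j, hj, rfl⟩ := hex
        refine ⟨j / 4, by omega, (hImem _ (by omega) _).2 (Or.inr ⟨j % 4, by omega, ?_⟩)⟩
        rw [Nat.div_add_mod]
      · rcases hcov v hv with ⟨r, hrk, hvr⟩ | hex'
        · push Not at hex
          exact ⟨r, hrk, (hImem r hrk v).2 (Or.inl (((hF r hrk).2.2.2.2.2.2 _).2 ⟨hvr, hex⟩))⟩
        · exact absurd hex' hex
  · intro r hrk
    obtain ⟨-, -, -, -, h5, h6, -⟩ := hF r hrk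
    simp only [I, List.length_cons, List.length_append, List.length_nil]
    omega

/-- A linkage joining all pairs of branch vertices by interiors of nearly equal sizes is a spanning
nearly-balanced subdivision. -/
theorem IsLinkage.hasSpanningNearlyBalancedKSubdivision {t k ℓ : ℕ} (ht : 2 ≤ t) (b : Fin t ↪ V)
    (e : {p : Fin t × Fin t // p.1 < p.2} ≃ Fin k) {B : Finset V}
    (hB : ∀ v, v ∈ B ↔ ∃ i, v = b i) {s s' : ℕ → V} {I : ℕ → List V}
    (hs : ∀ p, s (e p) = b p.1.1) (hs' : ∀ p, s' (e p) = b p.1.2) (hI : IsLinkage G B s s' k I)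
    (hlen : ∀ r < k, ℓ ≤ (I r).length + 1 ∧ (I r).length ≤ ℓ + 1) :
    HasSpanningNearlyBalancedKSubdivision G t := by
  have hW : ∀ i j : Fin t, i < j → ∃ w : G.Walk (b i) (b j),
      ∃ r, ∃ hij : i < j, r = (e ⟨(i, j), hij⟩ : ℕ) ∧ w.support = b i :: (I r ++ [b j]) := by
    intro i j hij
    have hc := hI.chain (e ⟨(i, j), hij⟩) (e ⟨(i, j), hij⟩).2
    rw [hs, hs'] at hc
    have hne : b i :: (I (e ⟨(i, j), hij⟩) ++ [b j]) ≠ [] := by simp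
    have h1 : (b i :: (I (e ⟨(i, j), hij⟩) ++ [b j])).head hne = b i := rfl
    have h2 : (b i :: (I (e ⟨(i, j), hij⟩) ++ [b j])).getLast hne = b j := by simp
    refine ⟨(Walk.ofSupport _ hne hc).copy h1 h2, _, hij, rfl, ?_⟩
    rw [Walk.support_copy, Walk.support_ofSupport]
  choose P r hr hre hP using hW
  have hrk : ∀ i j h, r i j h < k := fun i j h => by rw [hre]; exact (e _).2
  have hIb : ∀ i j h c, b c ∉ I (r i j h) := fun i j h c hc =>
    (hI.cover (b c)).1 ⟨_, hrk i j h, hc⟩ ((hB _).2 ⟨c, rfl⟩)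
  have hlenP : ∀ i j h, (P i j h).length = (I (r i j h)).length + 1 := by
    intro i j h
    have := (P i j h).length_support
    rw [hP] at this
    simp at this
    omega
  refine ⟨b, P, ?_, ?_, ?_, ?_, ℓ + 1, by omega, ?_⟩
  · intro i j h
    rw [Walk.isPath_def, hP]
    simp only [List.nodup_cons, List.mem_append, List.mem_singleton, not_or, List.nodup_append,
      List.nodup_nil, not_false_eq_true, List.not_mem_nil, true_and]
    refine ⟨⟨hIb i j h i, fun hij => h.ne (b.injective hij)⟩, hI.nodup _ (hrk i j h), ?_⟩
    rintro v hv _ rfl rfl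
    exact hIb i j h j hv
  · intro i j h c hci hcj hc
    rw [hP] at hc
    simp only [List.mem_cons, List.mem_append, List.not_mem_nil, or_false] at hc
    rcases hc with hc | hc | hc
    · exact hci (b.injective hc)
    · exact hIb i j h c hc
    · exact hcj (b.injective hc)
  · intro i j h i' j' h' hne v hv hv'
    rw [hP] at hv hv'
    simp only [List.mem_cons, List.mem_append, List.not_mem_nil, or_false] at hv hv'
    rcases hv with hv | hv | hv
    · exact ⟨i, hv⟩
    · rcases hv' with hv' | hv' | hv'
      · exact ⟨i', hv'⟩
      · have heq := hI.disj _ (hrk i j h) _ (hrk i' j' h') v hv hv'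
        rw [hre i j h, hre i' j' h', Fin.val_inj, e.apply_eq_iff_eq] at heq
        simp only [Subtype.mk.injEq, Prod.mk.injEq] at heq
        exact absurd heq hne
      · exact ⟨j', hv'⟩
    · exact ⟨j, hv⟩
  · intro v
    by_cases hv : v ∈ B
    · obtain ⟨i, rfl⟩ := (hB v).1 hv
      by_cases hi : (i : ℕ) = 0
      · have hlt : i < ⟨1, by omega⟩ := by rw [Fin.lt_def]; simp [hi]
        exact ⟨i, _, hlt, by rw [hP]; simp⟩
      · have hlt : (⟨0, by omega⟩ : Fin t) < i := by rw [Fin.lt_def]; simp; omega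
        exact ⟨_, i, hlt, by rw [hP]; simp⟩
    · obtain ⟨c, hc, hvc⟩ := (hI.cover v).2 hv
      obtain ⟨p, hp⟩ := e.surjective ⟨c, hc⟩
      refine ⟨p.1.1, p.1.2, p.2, ?_⟩
      rw [hP, hre]
      have : (e ⟨(p.1.1, p.1.2), p.2⟩ : ℕ) = c := by
        change (e p : ℕ) = c
        rw [hp]
      rw [this]
      simp [hvc]
  · intro i j h
    have := hlen _ (hrk i j h)
    rw [hlenP]
    omega

end Assembly

section Linkage

variable {V : Type*} {G : SimpleGraph V} {m : ℕ}

theorem eq_some_head?_getD {l : List V} (hl : l ≠ []) (x : V) :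
    l.head? = some (l.head?.getD x) := by
  cases l with
  | nil => exact absurd rfl hl
  | cons a l => rfl

theorem eq_some_getLast?_getD {l : List V} (hl : l ≠ []) (x : V) :
    l.getLast? = some (l.getLast?.getD x) := by
  rw [List.getLast?_eq_getLast_of_ne_nil hl]
  rfl

variable [Fintype V] [DecidableEq V] [DecidableRel G.Adj]

/-- A path through the complement of `B ∪ S` on which the vertices of `Z` can be bypassed is
rearranged into a linkage between prescribed pairs: `S` provides the links of the first `K` pieces
and absorbs the remainder, `Z` the links of the last pieces. -/
theorem IsJoined.exists_isLinkage (hJ : IsJoined G m) {B S Z : Finset V} {Q R : List V}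
    (hBS : Disjoint B S) (hn : (Q ++ R).Nodup) (hc : (Q ++ R).IsChain G.Adj)
    (hmem : ∀ v, v ∈ Q ++ R ↔ v ∉ B ∧ v ∉ S) (hsc : ∀ z ∈ Z, HasShortcut G Q z)
    (s s' : ℕ → V) {K k w : ℕ} {d : ℕ → ℕ} (hd : ∀ r < K + k + 1, 1 ≤ d r ∧ d r ≤ w)
    (hsum : ∑ r ∈ Finset.range (K + k + 1), d r + (4 * K + 4) + B.card = Fintype.card V)
    (hQ : Q.length ≤ ∑ r ∈ Finset.range K, d r)
    (hR : ∑ r ∈ Finset.range K, d r ≤ (Q ++ R).length)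
    (hZ : k ≠ 0 → ∀ v, 4 * k * w + 2 * m + 2 * K ≤ (Z.filter (G.Adj v)).card)
    (hS : ∀ v, 4 * K + 4 * m + 8 ≤ (S.filter (G.Adj v)).card) :
    ∃ I, IsLinkage G B s s' (K + k + 1) I ∧
      ∀ r < K + k + 1, (I r).length ≤ d r + 4 ∧ d r + 3 ≤ (I r).length := by
  obtain ⟨x, hx, y, hy, hxy⟩ := Finset.one_lt_card.1 (lt_of_lt_of_le (by omega) (hS (s 0)))
  simp only [Finset.mem_filter] at hx hy
  replace hx := hx.1
  replace hy := hy.1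
  have hQT : ∀ z ∈ Z, z ∈ (Q ++ R).take (∑ r ∈ Finset.range K, d r) := by
    intro z hz
    rw [List.take_append, List.take_of_length_le hQ]
    exact List.mem_append_left _ (hsc z hz).mem
  generalize hQR : Q ++ R = L at *
  replace hsc : ∀ z ∈ Z, HasShortcut G L z := fun z hz => hQR ▸ (hsc z hz).append_right R
  clear hQR hQ
  -- the first pieces
  let P₀ := listPiece L d
  let hd₀ : ℕ → V := fun r => (P₀ r).head?.getD (s 0)
  let tl₀ : ℕ → V := fun r => (P₀ r).getLast?.getD (s 0)
  have hlen₀ : ∀ r < K, (P₀ r).length = d r := fun r hr => length_listPiece hr hR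
  have hne₀ : ∀ r < K, P₀ r ≠ [] := fun r hr h0 => by
    have h1 := hlen₀ r hr
    have h2 := hd r (by omega)
    rw [h0, List.length_nil] at h1
    omega
  have hmem₀ : ∀ v, v ∈ L.take (∑ r ∈ Finset.range K, d r) ↔ ∃ r < K, v ∈ P₀ r := fun v =>
    mem_take_iff_exists_mem_listPiece L d K v
  -- links through `S`
  let S' := (S.erase x).erase y
  have hS' : ∀ v, 4 * K + 4 * m + 6 ≤ (S'.filter (G.Adj v)).card := by
    intro v
    have h1 : S.filter (G.Adj v) ⊆ S'.filter (G.Adj v) ∪ {x, y} := by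
      intro c
      simp only [S', Finset.mem_filter, Finset.mem_erase, Finset.mem_union, Finset.mem_insert,
        Finset.mem_singleton]
      tauto
    have h2 := Finset.card_le_card h1
    have h3 := Finset.card_union_le (S'.filter (G.Adj v)) {x, y}
    have h4 := Finset.card_le_two (a := x) (b := y)
    have h5 := hS v
    omega
  obtain ⟨g, hg, hgS, hginj⟩ := hJ.exists_links S' (fun v => (Fintype.equivFin V v : ℕ)) (L := 1)
    (fun c => Finset.card_le_one.2 fun a ha b hb => by
      simp only [Finset.mem_filter] at ha hb
      exact (Fintype.equivFin V).injective (Fin.ext (ha.2.trans hb.2.symm)))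
    (fun i => if i = 2 * K + 1 then y else if i % 2 = 0 then s (i / 2) else tl₀ (i / 2))
    (fun i => if i = 2 * K + 1 then s' (K + k) else if i = 2 * K then x
      else if i % 2 = 0 then hd₀ (i / 2) else s' (i / 2)) (2 * K + 2)
    (fun _ v => by have := hS' v; omega)
  replace hginj : ∀ i < 4 * K + 4, ∀ j < 4 * K + 4, g i = g j → i = j := fun i hi j hj hij =>
    hginj i (by omega) j (by omega) (by rw [hij])
  replace hgS : ∀ i < 4 * K + 4, g i ∈ S ∧ g i ≠ x ∧ g i ≠ y := by
    intro i hi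
    have := hgS i (by omega)
    simp only [S', Finset.mem_erase] at this
    tauto
  -- the last pieces
  let T := (Finset.range (4 * K + 4)).image g
  have hTcard : T.card = 4 * K + 4 := by
    rw [Finset.card_image_of_injOn, Finset.card_range]
    intro i hi j hj hij
    simp only [Finset.coe_range, Set.mem_Iio] at hi hj
    exact hginj i hi j hj hij
  have hTmem : ∀ v, v ∈ T ↔ ∃ i < 4 * K + 4, g i = v := by simp [T]
  have hTS : ∀ v ∈ T, v ∈ S ∧ v ≠ x ∧ v ≠ y := by
    intro v hv
    obtain ⟨i, hi, rfl⟩ := (hTmem v).1 hv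
    exact hgS i hi
  let U := Finset.univ \ (B ∪ ((L.take (∑ r ∈ Finset.range K, d r)).toFinset ∪ T))
  have hUmem : ∀ v, v ∈ U ↔ v ∉ B ∧ v ∉ L.take (∑ r ∈ Finset.range K, d r) ∧ v ∉ T := by
    intro v
    simp [U]
  have hSU : ∀ v ∈ S, v ∉ T → v ∈ U := fun v hv hvT =>
    (hUmem v).2 ⟨fun hB => Finset.disjoint_left.1 hBS hB hv,
      fun ht => ((hmem v).1 (List.mem_of_mem_take ht)).2 hv, hvT⟩
  have hUcard : U.card = ∑ i ∈ Finset.range (k + 1), d (K + i) := by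
    have h1 : (L.take (∑ r ∈ Finset.range K, d r)).toFinset.card = ∑ r ∈ Finset.range K, d r := by
      rw [List.toFinset_card_of_nodup (hn.sublist (List.take_sublist _ _)), List.length_take]
      omega
    have h2 : Disjoint (L.take (∑ r ∈ Finset.range K, d r)).toFinset T := by
      rw [Finset.disjoint_left]
      intro v hv hvT
      exact ((hmem v).1 (List.mem_of_mem_take (List.mem_toFinset.1 hv))).2 (hTS v hvT).1
    have h3 : Disjoint B ((L.take (∑ r ∈ Finset.range K, d r)).toFinset ∪ T) := by
      rw [Finset.disjoint_left]
      intro v hv hv'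
      rcases Finset.mem_union.1 hv' with hv' | hv'
      · exact ((hmem v).1 (List.mem_of_mem_take (List.mem_toFinset.1 hv'))).1 hv
      · exact Finset.disjoint_left.1 hBS hv (hTS v hv').1
    rw [Finset.card_sdiff_of_subset (Finset.subset_univ _), Finset.card_union_of_disjoint h3,
      Finset.card_union_of_disjoint h2, h1, hTcard, Finset.card_univ]
    rw [add_assoc K, Finset.sum_range_add] at hsum
    omega
  obtain ⟨H, hH, hHU⟩ := hJ.exists_hamilton_list (U := U) (x := x) (y := y)
    (fun v _ => by
      have h1 := hS v
      have h2 : S.filter (G.Adj v) ⊆ U.filter (G.Adj v) ∪ T := by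
        intro c hc
        rw [Finset.mem_filter] at hc
        by_cases hcT : c ∈ T
        · exact Finset.mem_union_right _ hcT
        · exact Finset.mem_union_left _ (Finset.mem_filter.2 ⟨hSU c hc.1 hcT, hc.2⟩)
      have h3 := Finset.card_le_card h2
      have h4 := Finset.card_union_le (U.filter (G.Adj v)) T
      omega) (hSU x hx fun h => (hTS x h).2.1 rfl) (hSU y hy fun h => (hTS y h).2.2 rfl) hxy
  have hHlen : ∑ i ∈ Finset.range (k + 1), d (K + i) = H.length := by
    rw [← hUcard, ← List.toFinset_card_of_nodup hH.nodup]
    congr 1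
    ext v
    rw [List.mem_toFinset]
    exact ⟨hHU v, hH.subset v⟩
  let P : ℕ → List V := fun r => if r < K then P₀ r else listPiece H (fun i => d (K + i)) (r - K)
  have hP₀ : ∀ r < K, P r = P₀ r := fun r hr => if_pos hr
  have hP₁ : ∀ r, K ≤ r → P r = listPiece H (fun i => d (K + i)) (r - K) := fun r hr =>
    if_neg (by omega)
  have hPlen : ∀ r < K + k + 1, (P r).length = d r := by
    intro r hr
    rcases lt_or_ge r K with hrK | hrK
    · rw [hP₀ r hrK, hlen₀ r hrK]
    · rw [hP₁ r hrK, length_listPiece (k := k + 1) (by omega) hHlen.le, Nat.add_sub_cancel' hrK]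
  have hPne : ∀ r < K + k + 1, P r ≠ [] := fun r hr h0 => by
    have h1 := hPlen r hr
    have h2 := hd r hr
    rw [h0, List.length_nil] at h1
    omega
  have hPU : ∀ r, K ≤ r → ∀ v ∈ P r, v ∈ U := fun r hr v hv =>
    hH.subset v ((listPiece_isInfix _ _ _).subset (hP₁ r hr ▸ hv))
  have hPL : ∀ r < K, ∀ v ∈ P r, v ∈ L.take (∑ r ∈ Finset.range K, d r) := fun r hr v hv =>
    (hmem₀ v).2 ⟨r, hr, hP₀ r hr ▸ hv⟩
  let hd' : ℕ → V := fun r => (P r).head?.getD (s 0)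
  let tl' : ℕ → V := fun r => (P r).getLast?.getD (s 0)
  have hhd₀ : ∀ r < K, hd₀ r = hd' r := fun r hr => by simp only [hd₀, hd', hP₀ r hr]
  have htl₀ : ∀ r < K, tl₀ r = tl' r := fun r hr => by simp only [tl₀, tl', hP₀ r hr]
  have hhdx : hd' K = x := by
    simp only [hd', hP₁ K le_rfl, Nat.sub_self]
    rw [head?_listPiece_zero (by have := hd K (by omega); simp; omega), hH.head]
    rfl
  have htly : tl' (K + k) = y := by
    simp only [tl', hP₁ (K + k) (by omega), Nat.add_sub_cancel_left]
    rw [getLast?_listPiece_last hHlen (by have := hd (K + k) (by omega); omega), hH.last]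
    rfl
  -- links through `Z`
  let Z' := Z.filter fun z => ∃ r < K, z ∈ P r ∧ (P r).head? ≠ some z ∧ (P r).getLast? ≠ some z
  have hZ' : k ≠ 0 → ∀ v, 4 * k * w + 2 * m ≤ (Z'.filter (G.Adj v)).card := by
    intro hk v
    have h1 : Z.filter (G.Adj v) ⊆ Z'.filter (G.Adj v) ∪ ((Finset.range K).image hd' ∪
        (Finset.range K).image tl') := by
      intro c hc
      rw [Finset.mem_filter] at hc
      obtain ⟨r, hr, hcr⟩ := (hmem₀ c).1 (hQT c hc.1)
      rw [← hP₀ r hr] at hcr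
      have hPr := hPne r (by omega)
      by_cases hch : (P r).head? = some c
      · have : c = hd' r := by simp [hd', hch]
        simp only [Finset.mem_union, Finset.mem_image, Finset.mem_range]
        exact Or.inr (Or.inl ⟨r, hr, this.symm⟩)
      by_cases hct : (P r).getLast? = some c
      · have : c = tl' r := by simp [tl', hct]
        simp only [Finset.mem_union, Finset.mem_image, Finset.mem_range]
        exact Or.inr (Or.inr ⟨r, hr, this.symm⟩)
      · exact Finset.mem_union_left _ (Finset.mem_filter.2
          ⟨Finset.mem_filter.2 ⟨hc.1, r, hr, hcr, hch, hct⟩, hc.2⟩)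
    have h2 := Finset.card_le_card h1
    have h3 := Finset.card_union_le (Z'.filter (G.Adj v)) ((Finset.range K).image hd' ∪
        (Finset.range K).image tl')
    have h4 := Finset.card_union_le ((Finset.range K).image hd') ((Finset.range K).image tl')
    have h5 := Finset.card_image_le (s := Finset.range K) (f := hd')
    have h6 := Finset.card_image_le (s := Finset.range K) (f := tl')
    rw [Finset.card_range] at h5 h6
    have h7 := hZ hk v
    omega
  have huniq : ∀ r < K + k + 1, ∀ r' < K + k + 1, ∀ v, v ∈ P r → v ∈ P r' → r = r' := by
    intro r hr r' hr' v hv hv'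
    rcases lt_or_ge r K with hrK | hrK <;> rcases lt_or_ge r' K with hrK' | hrK'
    · rw [hP₀ r hrK] at hv
      rw [hP₀ r' hrK'] at hv'
      exact eq_of_mem_listPiece hn hv hv'
    · exact absurd (hPL r hrK v hv) ((hUmem v).1 (hPU r' hrK' v hv')).2.1
    · exact absurd (hPL r' hrK' v hv') ((hUmem v).1 (hPU r hrK v hv)).2.1
    · rw [hP₁ r hrK] at hv
      rw [hP₁ r' hrK'] at hv'
      have := eq_of_mem_listPiece hH.nodup hv hv'
      omega
  have hcol : ∀ v, ∃ c, ∀ r < K, v ∈ P r → c = r := by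
    intro v
    by_cases hv : ∃ r < K, v ∈ P r
    · obtain ⟨r, hr, hvr⟩ := hv
      exact ⟨r, fun r' hr' hvr' => huniq r (by omega) r' (by omega) v hvr hvr'⟩
    · push Not at hv
      exact ⟨0, fun r hr hvr => absurd hvr (hv r hr)⟩
  choose col hcol using hcol
  obtain ⟨f, hf, hfZ, hfinj⟩ := hJ.exists_links Z' col (L := w)
    (fun c => by
      by_cases hcK : c < K
      · refine (Finset.card_le_card (t := (P c).toFinset) fun v hv => ?_).trans
          ((List.toFinset_card_le _).trans ?_)
        · simp only [Finset.mem_filter, Z'] at hv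
          obtain ⟨⟨-, r, hr, hvr, -⟩, rfl⟩ := hv
          rw [hcol v r hr hvr]
          exact List.mem_toFinset.2 hvr
        · rw [hPlen c (by omega)]
          exact (hd c (by omega)).2
      · rw [Finset.filter_eq_empty_iff.2, Finset.card_empty]
        · exact Nat.zero_le _
        · intro v hv hvc
          simp only [Finset.mem_filter, Z'] at hv
          obtain ⟨-, r, hr, hvr, -⟩ := hv
          have := hcol v r hr hvr
          omega)
    (fun i => if i % 2 = 0 then tl' (K + i / 2) else s (K + i / 2 + 1))
    (fun i => if i % 2 = 0 then s' (K + i / 2) else hd' (K + i / 2 + 1)) (2 * k)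
    (fun hk v => by have := hZ' (by omega) v; nlinarith)
  replace hfZ : ∀ i < 4 * k, f i ∈ Z ∧ ∃ r < K, f i ∈ P r ∧ (P r).head? ≠ some (f i) ∧
      (P r).getLast? ≠ some (f i) := fun i hi => Finset.mem_filter.1 (hfZ i (by omega))
  replace hfinj : ∀ i < 4 * k, ∀ j < 4 * k, ∀ r < K, f i ∈ P r → f j ∈ P r → i = j := by
    intro i hi j hj r hr hir hjr
    exact hfinj i (by omega) j (by omega) ((hcol _ r hr hir).trans (hcol _ r hr hjr).symm)
  have hfL : ∀ i < 4 * k, f i ∈ L.take (∑ r ∈ Finset.range K, d r) := by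
    intro i hi
    obtain ⟨-, r, hr, hir, -⟩ := hfZ i hi
    exact hPL r hr _ hir
  let h : ℕ → V := fun j => if j < 4 * K + 2 then g j else
    if j < 4 * (K + k) + 2 then f (j - (4 * K + 2)) else g (j - 4 * k)
  have hh : ∀ j < 4 * (K + k + 1), (∃ i < 4 * K + 4, h j = g i) ∨
      (4 * K + 2 ≤ j ∧ j < 4 * (K + k) + 2 ∧ h j = f (j - (4 * K + 2))) := by
    intro j hj
    simp only [h]
    split_ifs with h1 h2
    · exact Or.inl ⟨j, by omega, rfl⟩
    · exact Or.inr ⟨by omega, h2, rfl⟩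
    · exact Or.inl ⟨j - 4 * k, by omega, rfl⟩
  have hgP : ∀ i < 4 * K + 4, ∀ r < K + k + 1, g i ∉ P r := by
    intro i hi r hr hir
    rcases lt_or_ge r K with hrK | hrK
    · exact ((hmem _).1 (List.mem_of_mem_take (hPL r hrK _ hir))).2 (hgS i hi).1
    · exact ((hUmem _).1 (hPU r hrK _ hir)).2.2 ((hTmem _).2 ⟨i, hi, rfl⟩)
  have hgf : ∀ i < 4 * K + 4, ∀ j < 4 * k, g i ≠ f j := by
    intro i hi j hj hij
    exact ((hmem _).1 (List.mem_of_mem_take (hfL j hj))).2 (hij ▸ (hgS i hi).1)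
  have hhP : ∀ r < K + k + 1, ∀ j < 4 * (K + k + 1), h j ∈ P r → r < K ∧ 4 * K + 2 ≤ j ∧
      j < 4 * (K + k) + 2 ∧ h j = f (j - (4 * K + 2)) := by
    intro r hr j hj hjr
    rcases hh j hj with ⟨i, hi, he⟩ | ⟨h1, h2, he⟩
    · exact absurd (he ▸ hjr) (hgP i hi r hr)
    · refine ⟨?_, h1, h2, he⟩
      by_contra hrK
      exact ((hUmem _).1 (hPU r (not_lt.1 hrK) _ hjr)).2.1 (he ▸ hfL _ (by omega))
  refine Exists.imp (fun I hI => ⟨hI.1, fun r hr => ?_⟩)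
    (_root_.exists_isLinkage (G := G) (hd := hd') (tl := tl') (P := P) (h := h)
    (fun r hr => eq_some_head?_getD (hPne r hr) _)
    (fun r hr => eq_some_getLast?_getD (hPne r hr) _) ?_ ?_ huniq ?_ ?_ ?_ ?_ ?_ ?_ ?_ ?_)
  · have := hI.2 r hr
    rw [hPlen r hr] at this
    exact this
  · intro r hr
    rcases lt_or_ge r K with hrK | hrK
    · rw [hP₀ r hrK]
      exact (hc.drop _).take _
    · rw [hP₁ r hrK]
      exact (hH.chain.drop _).take _
  · intro r hr
    rcases lt_or_ge r K with hrK | hrK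
    · rw [hP₀ r hrK]
      exact hn.sublist (listPiece_isInfix _ _ _).sublist
    · rw [hP₁ r hrK]
      exact hH.nodup.sublist (listPiece_isInfix _ _ _).sublist
  · intro r hr v hv
    rcases lt_or_ge r K with hrK | hrK
    · exact ((hmem v).1 (List.mem_of_mem_take (hPL r hrK v hv))).1
    · exact ((hUmem v).1 (hPU r hrK v hv)).1
  · intro j hj
    rcases hh j hj with ⟨i, hi, he⟩ | ⟨h1, h2, he⟩
    · rw [he]
      exact fun hB => Finset.disjoint_left.1 hBS hB (hgS i hi).1
    · rw [he]
      exact ((hmem _).1 (List.mem_of_mem_take (hfL _ (by omega)))).1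
  · intro i hi j hj hij
    have hff : ∀ a < 4 * k, ∀ b < 4 * k, f a = f b → a = b := by
      intro a ha b hb hab
      obtain ⟨-, r, hr, har, -⟩ := hfZ a ha
      exact hfinj a ha b hb r hr har (hab ▸ har)
    simp only [h] at hij
    split_ifs at hij with h1 h2 h3 h4 h5 h6 h7 h8
    · exact hginj _ (by omega) _ (by omega) hij
    · exact absurd hij (hgf _ (by omega) _ (by omega))
    · have := hginj _ (by omega) _ (by omega) hij
      omega
    · exact absurd hij.symm (hgf _ (by omega) _ (by omega))
    · have := hff _ (by omega) _ (by omega) hij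
      omega
    · exact absurd hij.symm (hgf _ (by omega) _ (by omega))
    · have := hginj _ (by omega) _ (by omega) hij
      omega
    · exact absurd hij (hgf _ (by omega) _ (by omega))
    · have := hginj _ (by omega) _ (by omega) hij
      omega
  · intro r hr
    rcases le_or_gt r K with hrK | hrK
    · have e1 : h (4 * r) = g (2 * (2 * r)) := by
        simp only [h]; rw [if_pos (by omega)]; congr 1; ring
      have e2 : h (4 * r + 1) = g (2 * (2 * r) + 1) := by
        simp only [h]; rw [if_pos (by omega)]; congr 1; ring
      rw [e1, e2]
      obtain ⟨h1, h2, h3⟩ := hg (2 * r) (by omega)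
      rw [if_neg (by omega), if_pos (by omega), Nat.mul_div_cancel_left r (by omega)] at h1
      rw [if_neg (by omega)] at h3
      refine ⟨h1, h2, ?_⟩
      rcases hrK.lt_or_eq with hlt | rfl
      · rw [if_neg (by omega), if_pos (by omega), Nat.mul_div_cancel_left r (by omega),
          hhd₀ r hlt] at h3
        exact h3
      · rw [if_pos rfl] at h3
        rw [hhdx]
        exact h3
    · obtain ⟨u, rfl⟩ := Nat.exists_eq_add_of_lt hrK
      have e1 : h (4 * (K + u + 1)) = f (2 * (2 * u + 1)) := by
        simp only [h]; rw [if_neg (by omega), if_pos (by omega)]; congr 1; omega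
      have e2 : h (4 * (K + u + 1) + 1) = f (2 * (2 * u + 1) + 1) := by
        simp only [h]; rw [if_neg (by omega), if_pos (by omega)]; congr 1; omega
      rw [e1, e2]
      obtain ⟨h1, h2, h3⟩ := hf (2 * u + 1) (by omega)
      rw [if_neg (by omega), show (2 * u + 1) / 2 = u by omega] at h1 h3
      exact ⟨h1, h2, h3⟩
  · intro r hr
    rcases lt_or_ge r K with hrK | hrK
    · have e1 : h (4 * r + 2) = g (2 * (2 * r + 1)) := by
        simp only [h]; rw [if_pos (by omega)]; congr 1; ring
      have e2 : h (4 * r + 3) = g (2 * (2 * r + 1) + 1) := by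
        simp only [h]; rw [if_pos (by omega)]; congr 1; ring
      rw [e1, e2]
      obtain ⟨h1, h2, h3⟩ := hg (2 * r + 1) (by omega)
      rw [if_neg (by omega), if_neg (by omega), show (2 * r + 1) / 2 = r by omega,
        htl₀ r hrK] at h1
      rw [if_neg (by omega), if_neg (by omega), if_neg (by omega),
        show (2 * r + 1) / 2 = r by omega] at h3
      exact ⟨h1, h2, h3⟩
    · obtain ⟨u, rfl⟩ := Nat.exists_eq_add_of_le hrK
      rcases lt_or_ge u k with huk | huk
      · have e1 : h (4 * (K + u) + 2) = f (2 * (2 * u)) := by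
          simp only [h]; rw [if_neg (by omega), if_pos (by omega)]; congr 1; omega
        have e2 : h (4 * (K + u) + 3) = f (2 * (2 * u) + 1) := by
          simp only [h]; rw [if_neg (by omega), if_pos (by omega)]; congr 1; omega
        rw [e1, e2]
        obtain ⟨h1, h2, h3⟩ := hf (2 * u) (by omega)
        rw [if_pos (by omega), show (2 * u) / 2 = u by omega] at h1 h3
        exact ⟨h1, h2, h3⟩
      · obtain rfl : u = k := by omega
        have e1 : h (4 * (K + u) + 2) = g (2 * (2 * K + 1)) := by
          simp only [h]; rw [if_neg (by omega), if_neg (by omega)]; congr 1; omega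
        have e2 : h (4 * (K + u) + 3) = g (2 * (2 * K + 1) + 1) := by
          simp only [h]; rw [if_neg (by omega), if_neg (by omega)]; congr 1; omega
        rw [e1, e2]
        obtain ⟨h1, h2, h3⟩ := hg (2 * K + 1) (by omega)
        rw [if_pos rfl] at h1 h3
        rw [htly]
        exact ⟨h1, h2, h3⟩
  · intro r hr i hi j hj hir hjr
    obtain ⟨hrK, i1, i2, ei⟩ := hhP r hr i hi hir
    obtain ⟨-, j1, j2, ej⟩ := hhP r hr j hj hjr
    have := hfinj _ (by omega) _ (by omega) r hrK (ei ▸ hir) (ej ▸ hjr)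
    omega
  · intro r hr j hj hjr
    obtain ⟨hrK, j1, j2, ej⟩ := hhP r hr j hj hjr
    rw [ej] at hjr ⊢
    obtain ⟨hz, r', hr', hjr', hne, hne'⟩ := hfZ (j - (4 * K + 2)) (by omega)
    obtain rfl := huniq r hr r' (by omega) _ hjr hjr'
    exact (hsc _ hz).of_isInfix hn (hP₀ r hrK ▸ listPiece_isInfix _ _ _) hjr hne hne'
  · intro v hv
    by_cases hvL : v ∈ L.take (∑ r ∈ Finset.range K, d r)
    · obtain ⟨r, hr, hvr⟩ := (hmem₀ v).1 hvL
      exact Or.inl ⟨r, by omega, by rwa [hP₀ r hr]⟩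
    by_cases hvT : v ∈ T
    · obtain ⟨i, hi, rfl⟩ := (hTmem v).1 hvT
      right
      rcases lt_or_ge i (4 * K + 2) with hi' | hi'
      · exact ⟨i, by omega, by simp only [h]; rw [if_pos hi']⟩
      · refine ⟨i + 4 * k, by omega, ?_⟩
        simp only [h]
        rw [if_neg (by omega), if_neg (by omega), Nat.add_sub_cancel]
    · left
      have hvH := hHU v ((hUmem v).2 ⟨hv, hvL, hvT⟩)
      rw [← List.take_length (l := H), ← hHlen, mem_take_iff_exists_mem_listPiece] at hvH
      obtain ⟨r, hr, hvr⟩ := hvH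
      refine ⟨K + r, by omega, ?_⟩
      rwa [hP₁ _ (by omega), Nat.add_sub_cancel_left]

end Linkage

section Main

variable {V : Type*} {G : SimpleGraph V} {m : ℕ}

theorem exists_equitable_lengths (D : ℕ) {k : ℕ} (hk : 0 < k) :
    ∃ d : ℕ → ℕ, (∀ r, D / k ≤ d r ∧ d r ≤ D / k + 1) ∧ ∑ r ∈ Finset.range k, d r = D := by
  refine ⟨fun r => D / k + if r < D % k then 1 else 0, fun r => ?_, ?_⟩
  · dsimp only
    split_ifs <;> omega
  · rw [Finset.sum_add_distrib, Finset.sum_const, Finset.card_range, ← Finset.sum_filter,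
      Finset.sum_const, smul_eq_mul, smul_eq_mul, mul_one]
    have h1 : (Finset.range k).filter (· < D % k) = Finset.range (D % k) := by
      ext r
      have := Nat.mod_lt D hk
      simp only [Finset.mem_filter, Finset.mem_range]
      omega
    rw [h1, Finset.card_range]
    exact Nat.div_add_mod D k

variable [Fintype V] [DecidableEq V] [DecidableRel G.Adj]

/-- The linkage exists as soon as the auxiliary sets `S` and `Z` do. -/
theorem IsJoined.exists_balanced_isLinkage (hJ : IsJoined G m) {R x q n : ℕ} (hR : 0 < R)
    (hn : Fintype.card V = n) (hx : 2 ^ 12 ≤ x) (hq : q = 2 ^ 11 * R ^ 2)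
    (hnl : 2 ^ 20 * R ^ 3 * x ≤ n) (hnu : n ≤ 2 ^ 20 * R ^ 3 * (x + 1)) (hm : m ≤ x)
    (hdeg : ∀ v, n ≤ R * (Finset.univ.filter (G.Adj v)).card) {B S Z : Finset V}
    (hBS : Disjoint B S) (hBZ : Disjoint B Z) (hSZ : Disjoint S Z) (hB : B.card ≤ x)
    (hSc : S.card * (2 * q) ≤ n) (hZc : Z.card * (32 * R) ≤ n)
    (hSd : ∀ v, 32 * x ≤ (S.filter (G.Adj v)).card)
    (hZd : ∀ v, 2 ^ 12 * R * x ≤ (Z.filter (G.Adj v)).card)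
    (s s' : ℕ → V) {k : ℕ} (hk0 : 0 < k) (hk : k ≤ x) :
    ∃ I ℓ, IsLinkage G B s s' k I ∧
      ∀ r < k, ℓ ≤ (I r).length + 1 ∧ (I r).length ≤ ℓ + 1 := by
  have hx0 : x ≤ R * x := Nat.le_mul_of_pos_left x hR
  have hq0 : 2 ^ 11 ≤ q := by rw [hq]; exact Nat.le_mul_of_pos_right _ (by positivity)
  have hnx : 2 ^ 20 * x ≤ n := by
    refine le_trans ?_ hnl
    exact Nat.mul_le_mul_right _ (Nat.le_mul_of_pos_right _ (by positivity))
  have hS32 : S.card * 2 ^ 12 ≤ n := by nlinarith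
  have hdegx : ∀ v, 2 ^ 20 * x ≤ (Finset.univ.filter (G.Adj v)).card := by
    intro v
    have h1 : R * (2 ^ 20 * R ^ 2 * x) ≤ R * (Finset.univ.filter (G.Adj v)).card :=
      le_trans (le_of_eq (by ring)) (hnl.trans (hdeg v))
    refine le_trans ?_ (Nat.le_of_mul_le_mul_left h1 hR)
    exact Nat.mul_le_mul_right _ (Nat.le_mul_of_pos_right _ (by positivity))
  have hZdeg : ∀ v, 32 * Z.card ≤ (Finset.univ.filter (G.Adj v)).card := by
    intro v
    refine Nat.le_of_mul_le_mul_left (c := R) ?_ hR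
    exact le_trans (le_of_eq (by ring)) (hZc.trans (hdeg v))
  have hSdeg : ∀ v, 2 ^ 12 * S.card ≤ (Finset.univ.filter (G.Adj v)).card := by
    intro v
    refine Nat.le_of_mul_le_mul_left (c := R) (le_trans ?_ (hSc.trans (hdeg v))) hR
    rw [hq]
    have : R ≤ R ^ 2 := Nat.le_self_pow (by norm_num) R
    nlinarith [Nat.mul_le_mul_left S.card this]
  let W := Finset.univ \ (B ∪ S)
  have hWmem : ∀ v, v ∈ W ↔ v ∉ B ∧ v ∉ S := fun v => by simp [W]
  have hZW : Z ⊆ W := fun v hv => (hWmem v).2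
    ⟨fun h => Finset.disjoint_left.1 hBZ h hv, fun h => Finset.disjoint_left.1 hSZ h hv⟩
  have hWc : W.card + B.card + S.card = n := by
    have h1 := Finset.card_sdiff_add_card_eq_card (Finset.subset_univ (B ∪ S))
    rw [Finset.card_union_of_disjoint hBS, Finset.card_univ, hn] at h1
    change (Finset.univ \ (B ∪ S)).card + _ + _ = n
    omega
  obtain ⟨Q, Q', hQn, hQc, hQm, hQl, hQZ⟩ := hJ.exists_spanning_list hZW
    (fun v _ => by
      have h1 := card_filter_sdiff_ge (W := Finset.univ) (T := B ∪ S) (G.Adj v)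
      have h2 := Finset.card_union_le B S
      have h3 := hZdeg v
      have h4 := hSdeg v
      have h5 := hdegx v
      change _ ≤ ((Finset.univ \ (B ∪ S)).filter (G.Adj v)).card
      omega)
    (by rw [← Finset.card_pos]; omega)
  have hQQ : (Q ++ Q').length = W.card := by
    rw [← List.toFinset_card_of_nodup hQn]
    congr 1
    ext v
    rw [List.mem_toFinset, hQm]
  replace hQm : ∀ v, v ∈ Q ++ Q' ↔ v ∉ B ∧ v ∉ S := fun v => (hQm v).trans (hWmem v)
  -- `k'` counts the pieces, apart from the very last one, that end in links through `Z`
  obtain ⟨k', K, hk', hkq, hkq', h2K⟩ : ∃ k' K, K + k' + 1 = k ∧ k' * q ≤ k ∧ k ≤ (k' + 1) * q ∧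
      (k ≠ 1 → k ≤ 2 * K) := by
    have h1 := Nat.div_mul_le_self k q
    have h2 := (Nat.lt_mul_div_succ k (by omega : 0 < q)).le
    have h3 : k / q * 2 ^ 11 ≤ k := by nlinarith
    refine ⟨k / q, k - k / q - 1, by omega, h1, by linarith, fun h => by omega⟩
  obtain ⟨d, hd, hdsum⟩ := exists_equitable_lengths (n - B.card - (4 * K + 4)) hk0
  have hkw : k * ((n - B.card - (4 * K + 4)) / k) ≤ n - B.card - (4 * K + 4) :=
    Nat.mul_div_le _ _
  have hkw' := (Nat.lt_mul_div_succ (n - B.card - (4 * K + 4)) hk0).le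
  rw [mul_add, mul_one] at hkw'
  generalize (n - B.card - (4 * K + 4)) / k = w at hd hkw hkw'
  have hw1 : 1 ≤ w := by
    by_contra h0
    have h0' : w = 0 := by omega
    rw [h0', mul_zero] at hkw'
    omega
  have hhalf : n ≤ 2 * (k * w) := by omega
  have hfirst : K * w ≤ ∑ r ∈ Finset.range K, d r := by
    have := Finset.card_nsmul_le_sum (Finset.range K) d w fun r _ => (hd r).1
    simpa using this
  have hlast : (k' + 1) * w ≤ ∑ i ∈ Finset.range (k' + 1), d (K + i) := by
    have := Finset.card_nsmul_le_sum (Finset.range (k' + 1)) (fun i => d (K + i)) w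
      fun r _ => (hd _).1
    simpa using this
  have hdsplit := hdsum
  rw [← hk', add_assoc K, Finset.sum_range_add] at hdsplit
  have hSlast : S.card ≤ (k' + 1) * w := by
    refine Nat.le_of_mul_le_mul_left (c := 2 * q) ?_ (by omega)
    calc 2 * q * S.card ≤ n := by linarith
      _ ≤ 2 * (k * w) := hhalf
      _ ≤ 2 * ((k' + 1) * q * w) := by gcongr
      _ = 2 * q * ((k' + 1) * w) := by ring
  have hlen : ∑ r ∈ Finset.range K, d r ≤ (Q ++ Q').length := by
    rw [hQQ]
    omega
  have hsum : ∑ r ∈ Finset.range (K + k' + 1), d r + (4 * K + 4) + B.card = Fintype.card V := by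
    rw [hk', hdsum, hn]
    omega
  have hdw : ∀ r < K + k' + 1, 1 ≤ d r ∧ d r ≤ w + 1 := fun r _ =>
    ⟨hw1.trans (hd r).1, (hd r).2⟩
  have hSK : ∀ v, 4 * K + 4 * m + 8 ≤ (S.filter (G.Adj v)).card := fun v => by
    have := hSd v
    omega
  have hfinish : (∃ I, IsLinkage G B s s' (K + k' + 1) I ∧
      ∀ r < K + k' + 1, (I r).length ≤ d r + 4 ∧ d r + 3 ≤ (I r).length) →
      ∃ I ℓ, IsLinkage G B s s' k I ∧
        ∀ r < k, ℓ ≤ (I r).length + 1 ∧ (I r).length ≤ ℓ + 1 := by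
    rintro ⟨I, hI, hIl⟩
    rw [hk'] at hI hIl
    refine ⟨I, w + 4, hI, fun r hr => ?_⟩
    have h1 := hIl r hr
    have h2 := hd r
    omega
  apply hfinish
  by_cases hk1 : k = 1
  · have hK0 : K = 0 := by omega
    have hk0' : k' = 0 := by omega
    exact hJ.exists_isLinkage (Z := ∅) (Q := []) (R := Q ++ Q') hBS hQn hQc hQm (by simp) s s'
      hdw hsum (by simp) hlen (fun h => absurd hk0' h) hSK
  · refine hJ.exists_isLinkage hBS hQn hQc hQm hQZ s s' hdw hsum ?_ hlen (fun _ v => ?_) hSK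
    · have h1 : k * w ≤ 2 * (K * w) := by
        rw [← mul_assoc]
        exact Nat.mul_le_mul_right _ (h2K hk1)
      have h2 : Z.card * 32 ≤ n := by nlinarith
      omega
    · refine le_trans ?_ (hZd v)
      have h1 : q * (4 * k' * (w + 1)) ≤ q * (2 ^ 11 * R * (x + 1) + x) := by
        calc q * (4 * k' * (w + 1)) = 4 * ((k' * q) * (w + 1)) := by ring
          _ ≤ 4 * (k * (w + 1)) := by gcongr
          _ = 4 * (k * w) + 4 * k := by ring
          _ ≤ 4 * n + 4 * x := by omega
          _ ≤ 4 * (2 ^ 20 * R ^ 3 * (x + 1)) + q * x := by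
            have : 4 * x ≤ q * x := Nat.mul_le_mul_right _ (by omega)
            linarith
          _ = q * (2 ^ 11 * R * (x + 1) + x) := by rw [hq]; ring
      have h2 := Nat.le_of_mul_le_mul_left h1 (by omega)
      have h3 : R * 2 ^ 12 ≤ R * x := Nat.mul_le_mul_left R hx
      have h4 : 2 ^ 11 * R * (x + 1) = 2 ^ 11 * (R * x) + 2 ^ 11 * R := by ring
      have h5 : 2 ^ 12 * R * x = 2 ^ 12 * (R * x) := by ring
      rw [h4] at h2
      rw [h5]
      omega

/-- Quantitative form of the theorem, with all quantities measured in terms of `x`. -/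
theorem IsJoined.hasSpanningNearlyBalancedKSubdivision (hJ : IsJoined G m) {R x n t : ℕ}
    (hR : 0 < R) (hn : Fintype.card V = n) (hx : 2 ^ 20 * R ^ 3 * (2 ^ 12 * R ^ 2) ≤ x)
    (hnl : 2 ^ 20 * R ^ 3 * x ≤ n) (hnu : n ≤ 2 ^ 20 * R ^ 3 * (x + 1)) (hm : m ≤ x)
    (hdeg : ∀ v, n ≤ R * G.degree v) (ht : 2 ≤ t) (htx : t * t ≤ x) :
    HasSpanningNearlyBalancedKSubdivision G t := by
  replace hdeg : ∀ v, n ≤ R * (Finset.univ.filter (G.Adj v)).card := fun v => by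
    rw [← G.neighborFinset_eq_filter, card_neighborFinset_eq_degree]
    exact hdeg v
  have hR1 : 1 ≤ R ^ 3 := Nat.one_le_pow _ _ hR
  have hR2 : 1 ≤ R ^ 2 := Nat.one_le_pow _ _ hR
  have hx12 : 2 ^ 12 ≤ x := by nlinarith
  have htx' : t ≤ x := by nlinarith
  have hdegx : ∀ v, 2 ^ 20 * R ^ 2 * x ≤ (Finset.univ.filter (G.Adj v)).card := fun v => by
    refine Nat.le_of_mul_le_mul_left (c := R) ?_ hR
    exact le_trans (le_of_eq (by ring)) (hnl.trans (hdeg v))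
  have hpow : n * (2 ^ 12 * R ^ 2) < 2 ^ (32 * x) := by
    have h1 : x + 1 ≤ 2 ^ x := Nat.lt_two_pow_self
    calc n * (2 ^ 12 * R ^ 2) ≤ 2 ^ 20 * R ^ 3 * (x + 1) * (2 ^ 12 * R ^ 2) := by gcongr
      _ = 2 ^ 20 * R ^ 3 * (2 ^ 12 * R ^ 2) * (x + 1) := by ring
      _ ≤ x * (x + 1) := by gcongr
      _ < (x + 1) * (x + 1) := by gcongr; omega
      _ ≤ 2 ^ x * 2 ^ x := by gcongr
      _ = 2 ^ (2 * x) := by ring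
      _ ≤ 2 ^ (32 * x) := Nat.pow_le_pow_right (by norm_num) (by omega)
  have htn : t ≤ Fintype.card V := by nlinarith
  obtain ⟨b⟩ : Nonempty (Fin t ↪ V) :=
    Function.Embedding.nonempty_of_card_le (by simpa using htn)
  let B : Finset V := Finset.univ.map b
  have hB : B.card = t := by simp [B]
  -- the reservoir `Z`
  obtain ⟨Z₀, hZ₀c, hZ₀⟩ := exists_small_hitting_set (q := 32 * R) (x := 2 ^ 12 * R * x)
    (fun v => (Finset.univ \ B).filter (G.Adj v)) (by omega)
    (fun v => by
      have h1 := card_filter_sdiff_ge (W := Finset.univ) (T := B) (G.Adj v)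
      have h2 := hdegx v
      have h3 : x ≤ R ^ 2 * x := Nat.le_mul_of_pos_left x hR2
      nlinarith)
    (by
      rw [hn]
      calc n * (32 * R) ≤ n * (2 ^ 12 * R ^ 2) := by
            gcongr
            · norm_num
            · exact Nat.le_self_pow (by norm_num) R
        _ < _ := hpow
        _ ≤ _ := Nat.pow_le_pow_right (by norm_num) (by nlinarith))
  let Z := Z₀ \ B
  have hZc : Z.card ≤ Z₀.card := Finset.card_le_card Finset.sdiff_subset
  have hZd : ∀ v, 2 ^ 12 * R * x ≤ (Z.filter (G.Adj v)).card := fun v =>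
    (hZ₀ v).trans (Finset.card_le_card fun u hu => by
      simp only [Finset.mem_inter, Finset.mem_filter, Finset.mem_sdiff, Z] at hu ⊢
      tauto)
  rw [hn] at hZ₀c
  have hZn : Z.card * (32 * R) ≤ n := (Nat.mul_le_mul_right _ hZc).trans hZ₀c
  have hZdeg : ∀ v, 32 * Z.card ≤ (Finset.univ.filter (G.Adj v)).card := fun v => by
    refine Nat.le_of_mul_le_mul_left (c := R) ?_ hR
    exact le_trans (le_of_eq (by ring)) (hZn.trans (hdeg v))
  -- the reservoir `S`
  obtain ⟨S₀, hS₀c, hS₀⟩ := exists_small_hitting_set (q := 2 ^ 12 * R ^ 2) (x := 32 * x)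
    (fun v => (Finset.univ \ (B ∪ Z)).filter (G.Adj v)) (by omega)
    (fun v => by
      have h1 := card_filter_sdiff_ge (W := Finset.univ) (T := B ∪ Z) (G.Adj v)
      have h2 := hdegx v
      have h3 : x ≤ R ^ 2 * x := Nat.le_mul_of_pos_left x hR2
      have h4 := Finset.card_union_le B Z
      have h5 := hZdeg v
      nlinarith)
    (by rw [hn]; exact hpow)
  let S := S₀ \ (B ∪ Z)
  have hSc : S.card ≤ S₀.card := Finset.card_le_card Finset.sdiff_subset
  have hSd : ∀ v, 32 * x ≤ (S.filter (G.Adj v)).card := fun v =>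
    (hS₀ v).trans (Finset.card_le_card fun u hu => by
      simp only [Finset.mem_inter, Finset.mem_filter, Finset.mem_sdiff, S] at hu ⊢
      tauto)
  rw [hn] at hS₀c
  have hSn : S.card * (2 * (2 ^ 11 * R ^ 2)) ≤ n :=
    (Nat.mul_le_mul_right _ hSc).trans (le_trans (le_of_eq (by ring)) hS₀c)
  have hBS : Disjoint B S := by
    rw [Finset.disjoint_left]
    intro v hv hvS
    simp only [S, Finset.mem_sdiff, Finset.mem_union] at hvS
    tauto
  have hBZ : Disjoint B Z := by
    rw [Finset.disjoint_left]
    intro v hv hvZ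
    simp only [Z, Finset.mem_sdiff] at hvZ
    tauto
  have hSZ : Disjoint S Z := by
    rw [Finset.disjoint_left]
    intro v hvS hvZ
    simp only [S, Finset.mem_sdiff, Finset.mem_union] at hvS
    tauto
  -- enumerate the pairs of branch vertices
  obtain ⟨k, e, hk0, hk⟩ : ∃ k, ∃ _ : {p : Fin t × Fin t // p.1 < p.2} ≃ Fin k, 0 < k ∧ k ≤ x :=
    ⟨_, Fintype.equivFin _,
      Fintype.card_pos_iff.2 ⟨⟨(⟨0, by omega⟩, ⟨1, by omega⟩), by simp [Fin.lt_def]⟩⟩,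
      (Fintype.card_subtype_le _).trans (by simpa using htx)⟩
  have hpair : ∀ f : Fin t × Fin t → Fin t, ∃ s : ℕ → V, ∀ p, s (e p) = b (f p.1) := by
    intro f
    refine ⟨fun r => if h : r < k then b (f (e.symm ⟨r, h⟩).1) else b ⟨0, by omega⟩, fun p => ?_⟩
    simp
  obtain ⟨s, hs⟩ := hpair Prod.fst
  obtain ⟨s', hs'⟩ := hpair Prod.snd
  obtain ⟨I, ℓ, hI, hIl⟩ := hJ.exists_balanced_isLinkage hR hn hx12 rfl hnl hnu hm hdeg hBS hBZ
    hSZ (hB.trans_le htx') hSn hZn hSd hZd s s' hk0 hk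
  exact hI.hasSpanningNearlyBalancedKSubdivision ht b e (fun v => by simp [B, eq_comm]) hs hs' hIl

end Main

/-- Theorem 1.4: for every `μ > 0`, there are constants `c, ε ∈ (0,1]` and `n₀`
such that every `n`-vertex `⌈εn⌉`-joined graph with minimum degree at least `μn`
(for `n ≥ n₀`) contains a spanning nearly-balanced subdivision of `K_t`
for all `2 ≤ t ≤ c√n`. -/
theorem spanning_subdivision_no_bipartite_holes (μ : ℝ) (hμ : 0 < μ) :
    ∃ c ε : ℝ, 0 < c ∧ c ≤ 1 ∧ 0 < ε ∧ ε ≤ 1 ∧ ∃ n₀ : ℕ,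
      ∀ n : ℕ, n₀ ≤ n →
        ∀ (V : Type) [Fintype V] [DecidableEq V] (G : SimpleGraph V) [DecidableRel G.Adj],
          Fintype.card V = n →
          IsJoined G ⌈ε * n⌉₊ →
          (∀ v : V, μ * n ≤ (G.degree v : ℝ)) →
          ∀ t : ℕ, 2 ≤ t → (t : ℝ) ≤ c * Real.sqrt n →
            HasSpanningNearlyBalancedKSubdivision G t := by
  obtain ⟨R, hRμ⟩ := exists_nat_ge (1 / μ)
  have hR : 0 < R := by
    have : (0 : ℝ) < R := lt_of_lt_of_le (by positivity) hRμ
    exact_mod_cast this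
  set C : ℕ := 2 ^ 20 * R ^ 3 with hC
  have hC1 : 1 ≤ C := Nat.one_le_iff_ne_zero.2 (by positivity)
  have hC1' : (1 : ℝ) ≤ C := by exact_mod_cast hC1
  refine ⟨1 / C, 1 / (2 * C), by positivity, ?_, by positivity, ?_,
    C * (C * (2 ^ 12 * R ^ 2)) + 2 * C, ?_⟩
  · rw [div_le_one (by positivity)]; exact hC1'
  · rw [div_le_one (by positivity)]; linarith
  intro n hn V _ _ G _ hV hJ hdeg t ht htn
  have hx : ∀ a : ℕ, (C * a : ℝ) ≤ n → a ≤ n / C := fun a ha => by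
    rw [Nat.le_div_iff_mul_le hC1, mul_comm]
    exact_mod_cast ha
  have hn' : (2 * C : ℝ) ≤ n := by exact_mod_cast (Nat.le_add_left _ _).trans hn
  refine hJ.hasSpanningNearlyBalancedKSubdivision hR hV (x := n / C) ?_ (Nat.mul_div_le _ _)
    ?_ ?_ ?_ ht ?_
  · rw [Nat.le_div_iff_mul_le hC1, mul_comm]
    exact (Nat.le_add_right _ _).trans hn
  · exact (Nat.lt_mul_div_succ n hC1).le
  · apply hx
    have h1 : (⌈1 / (2 * C : ℝ) * n⌉₊ : ℝ) ≤ 1 / (2 * C) * n + 1 :=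
      (Nat.ceil_lt_add_one (by positivity)).le
    calc (C * ⌈1 / (2 * C : ℝ) * n⌉₊ : ℝ) ≤ C * (1 / (2 * C) * n + 1) := by gcongr
      _ = n / 2 + C := by field_simp
      _ ≤ n := by linarith
  · intro v
    have h1 := hdeg v
    have h2 : (1 : ℝ) ≤ R * μ := by rwa [div_le_iff₀ hμ] at hRμ
    have h3 : (n : ℝ) ≤ R * G.degree v := by
      calc (n : ℝ) = 1 * n := by ring
        _ ≤ R * μ * n := by gcongr
        _ = R * (μ * n) := by ring
        _ ≤ R * G.degree v := by gcongr
    exact_mod_cast h3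
  · apply hx
    push_cast
    have h1 : (t : ℝ) * t ≤ (1 / C * Real.sqrt n) * (1 / C * Real.sqrt n) := by gcongr
    have h2 : (1 / C * Real.sqrt n) * (1 / C * Real.sqrt n) = n / (C * C : ℝ) := by
      have := Real.mul_self_sqrt (Nat.cast_nonneg n : (0 : ℝ) ≤ n)
      field_simp
      linarith
    rw [h2] at h1
    calc (C * (t * t) : ℝ) ≤ C * (n / (C * C)) := by gcongr
      _ = n / C := by field_simp
      _ ≤ n := div_le_self (by positivity) hC1'
end

section
/- There exists ε₀ ∈ (0,1) such that for every ε ∈ (0, ε₀] there exists C > 0 such that the following holds. Let n ≥ 3 and d ∈ ℕ and λ > 0 satisfy d/λ ≥ C·(log n)^3. Suppose G is an (n,d,λ)-graph containing disjoint subsets A, B ⊆ V(G) with |A| = |B| such that every vertex of A has at least ε·d/(2(log n)^3) neighbours in B and every vertex of B has at least ε·d/(2(log n)^3) neighbours in A. Then the bipartite graph G[A,B] (with parts A and B and the edges of G between them) contains a perfect matching. -/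
open SimpleGraph

/-- `G` is an `(n,d,λ)`-graph: `n` vertices, `d`-regular, and all adjacency-matrix
eigenvalues except the largest one `d` are at most `λ` in absolute value. -/
def IsNDLGraph (n d : ℕ) (lam : ℝ) {V : Type*} [Fintype V] [DecidableEq V]
    (G : SimpleGraph V) [DecidableRel G.Adj] : Prop :=
  Fintype.card V = n ∧ G.IsRegularOfDegree d ∧
    ∀ hA : (G.adjMatrix ℝ).IsHermitian,
      ∃ i₀ : V, hA.eigenvalues i₀ = (d : ℝ) ∧
        ∀ i : V, i ≠ i₀ → |hA.eigenvalues i| ≤ lam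

open Matrix in
/-- Parseval's identity for the eigenvector basis, in terms of the dot product. -/
lemma sum_dotProduct_eigenvectorBasis {V : Type*} [Fintype V] [DecidableEq V]
    {M : Matrix V V ℝ} (hM : M.IsHermitian) (x y : V → ℝ) :
    ∑ i, ((hM.eigenvectorBasis i).ofLp ⬝ᵥ x) * ((hM.eigenvectorBasis i).ofLp ⬝ᵥ y) = x ⬝ᵥ y := by
  have h := hM.eigenvectorBasis.sum_inner_mul_inner (WithLp.toLp 2 x) (WithLp.toLp 2 y)
  simp only [EuclideanSpace.inner_eq_star_dotProduct, star_trivial] at h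
  rw [dotProduct_comm x y, ← h]
  exact Finset.sum_congr rfl fun i _ => by rw [dotProduct_comm y]

open Matrix in
lemma eigenvectorBasis_dotProduct_mulVec {V : Type*} [Fintype V] [DecidableEq V]
    {M : Matrix V V ℝ} (hM : M.IsHermitian) (i : V) (y : V → ℝ) :
    (hM.eigenvectorBasis i).ofLp ⬝ᵥ (M *ᵥ y) =
      hM.eigenvalues i * ((hM.eigenvectorBasis i).ofLp ⬝ᵥ y) := by
  have hT : Mᵀ = M := by simpa [Matrix.IsHermitian, conjTranspose_eq_transpose_of_trivial] using hM
  have h : (hM.eigenvectorBasis i).ofLp ᵥ* M =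
      hM.eigenvalues i • (hM.eigenvectorBasis i).ofLp := by
    rw [← hM.mulVec_eigenvectorBasis i]
    simpa only [hT] using (vecMul_transpose M (hM.eigenvectorBasis i).ofLp)
  rw [dotProduct_mulVec, h, smul_dotProduct, smul_eq_mul]

open Matrix in
lemma indicator_dotProduct_indicator {V : Type*} [Fintype V] [DecidableEq V] (S T : Finset V) :
    (fun v => if v ∈ S then (1 : ℝ) else 0) ⬝ᵥ (fun v => if v ∈ T then (1 : ℝ) else 0) =
      ((S ∩ T).card : ℝ) := by
  simp [dotProduct, Finset.sum_ite_mem, Finset.inter_comm]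

open Matrix in
lemma indicator_dotProduct_adjMatrix_mulVec {V : Type*} [Fintype V] [DecidableEq V]
    (G : SimpleGraph V) [DecidableRel G.Adj] (S T : Finset V) :
    (fun v => if v ∈ S then (1 : ℝ) else 0) ⬝ᵥ
      (G.adjMatrix ℝ *ᵥ fun v => if v ∈ T then (1 : ℝ) else 0) =
        ∑ a ∈ S, ((G.neighborFinset a ∩ T).card : ℝ) := by
  simp [dotProduct, Finset.sum_ite_mem, SimpleGraph.adjMatrix_mulVec_apply]

open Matrix in
/-- The expander mixing lemma. -/
lemma IsNDLGraph.expander_mixing {n d : ℕ} {lam : ℝ} {V : Type*} [Fintype V] [DecidableEq V]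
    {G : SimpleGraph V} [DecidableRel G.Adj] (h : IsNDLGraph n d lam G) (hlam0 : 0 ≤ lam)
    (hlam : lam < d) (S T : Finset V) :
    |∑ a ∈ S, ((G.neighborFinset a ∩ T).card : ℝ) - d * (S.card * T.card) / n| ≤
      lam * √(S.card * T.card) := by
  obtain ⟨hcard, hreg, hspec⟩ := h
  have hA : (G.adjMatrix ℝ).IsHermitian := by
    simp [Matrix.IsHermitian, conjTranspose_eq_transpose_of_trivial]
  obtain ⟨i₀, hi₀, hle⟩ := hspec hA
  have hn : (0 : ℝ) < n := by
    rw [← hcard]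
    exact_mod_cast Fintype.card_pos_iff.mpr ⟨i₀⟩
  set c : V → (V → ℝ) → ℝ := fun i x => (hA.eigenvectorBasis i).ofLp ⬝ᵥ x with hc
  have parseval : ∀ x y : V → ℝ, ∑ i, c i x * c i y = x ⬝ᵥ y :=
    sum_dotProduct_eigenvectorBasis hA
  have hmul : ∀ i y, c i (G.adjMatrix ℝ *ᵥ y) = hA.eigenvalues i * c i y :=
    eigenvectorBasis_dotProduct_mulVec hA
  let χ : Finset V → V → ℝ := fun S v => if v ∈ S then 1 else 0
  have hχ : ∀ S T : Finset V, χ S ⬝ᵥ χ T = ((S ∩ T).card : ℝ) := indicator_dotProduct_indicator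
  have hone : G.adjMatrix ℝ *ᵥ χ Finset.univ = (d : ℝ) • χ Finset.univ := by
    ext v
    simp [χ, SimpleGraph.adjMatrix_mulVec_apply, hreg.degree_eq v]
  have hzero : ∀ i, i ≠ i₀ → c i (χ Finset.univ) = 0 := by
    intro i hi
    have h1 := hmul i (χ Finset.univ)
    rw [hone] at h1
    simp only [hc, dotProduct_smul, smul_eq_mul] at h1
    have h2 : hA.eigenvalues i < d := (le_abs_self _).trans_lt ((hle i hi).trans_lt hlam)
    have h3 : ((d : ℝ) - hA.eigenvalues i) * c i (χ Finset.univ) = 0 := by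
      simp only [hc]; linarith
    exact (mul_eq_zero.mp h3).resolve_left (sub_ne_zero.mpr h2.ne')
  have huniv : ∀ S : Finset V, c i₀ (χ Finset.univ) * c i₀ (χ S) = S.card := by
    intro S
    have h1 := parseval (χ Finset.univ) (χ S)
    rw [hχ, Finset.univ_inter, Finset.sum_eq_single i₀] at h1
    · exact h1
    · intro i _ hi; rw [hzero i hi, zero_mul]
    · simp
  have hi₀ST : c i₀ (χ S) * c i₀ (χ T) = S.card * T.card / n := by
    have h1 := huniv Finset.univ
    rw [Finset.card_univ, hcard] at h1
    rw [eq_div_iff hn.ne', ← huniv S, ← huniv T, ← h1]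
    ring
  have hedges : ∑ a ∈ S, ((G.neighborFinset a ∩ T).card : ℝ) =
      ∑ i, hA.eigenvalues i * (c i (χ S) * c i (χ T)) := by
    rw [← indicator_dotProduct_adjMatrix_mulVec, ← parseval]
    refine Finset.sum_congr rfl fun i _ => ?_
    rw [hmul]
    ring
  have hdiff : ∑ a ∈ S, ((G.neighborFinset a ∩ T).card : ℝ) - d * (S.card * T.card) / n =
      ∑ i ∈ Finset.univ.erase i₀, hA.eigenvalues i * (c i (χ S) * c i (χ T)) := by
    rw [hedges, ← Finset.add_sum_erase _ _ (Finset.mem_univ i₀), hi₀, hi₀ST]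
    ring
  have hnorm : ∀ S : Finset V, ∑ i ∈ Finset.univ.erase i₀, |c i (χ S)| ^ 2 ≤ S.card := by
    intro S
    have h1 := parseval (χ S) (χ S)
    rw [hχ, Finset.inter_self] at h1
    rw [← h1]
    simp only [sq_abs, ← sq]
    exact Finset.sum_le_sum_of_subset_of_nonneg (Finset.erase_subset _ _)
      fun i _ _ => sq_nonneg _
  rw [hdiff]
  calc |∑ i ∈ Finset.univ.erase i₀, hA.eigenvalues i * (c i (χ S) * c i (χ T))|
      ≤ ∑ i ∈ Finset.univ.erase i₀, |hA.eigenvalues i * (c i (χ S) * c i (χ T))| :=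
        Finset.abs_sum_le_sum_abs _ _
    _ ≤ ∑ i ∈ Finset.univ.erase i₀, lam * (|c i (χ S)| * |c i (χ T)|) := by
        refine Finset.sum_le_sum fun i hi => ?_
        rw [abs_mul, abs_mul]
        exact mul_le_mul_of_nonneg_right (hle i (Finset.ne_of_mem_erase hi)) (by positivity)
    _ = lam * ∑ i ∈ Finset.univ.erase i₀, |c i (χ S)| * |c i (χ T)| := by rw [Finset.mul_sum]
    _ ≤ lam * √(S.card * T.card) := by
        refine mul_le_mul_of_nonneg_left (Real.le_sqrt_of_sq_le ?_) hlam0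
        refine (Finset.sum_mul_sq_le_sq_mul_sq _ _ _).trans ?_
        exact mul_le_mul (hnorm S) (hnorm T) (Finset.sum_nonneg fun i _ => sq_nonneg _)
          (Nat.cast_nonneg _)

/-- If `δ` bounds from below the number of neighbours in `T` of each vertex of a nonempty `S`,
and `S` is larger than `T`, then `T` has at least `n (δ - λ) / d` vertices. -/
lemma IsNDLGraph.le_card_of_minDegree {n d : ℕ} {lam δ : ℝ} {V : Type*} [Fintype V]
    [DecidableEq V] {G : SimpleGraph V} [DecidableRel G.Adj] (h : IsNDLGraph n d lam G)
    (hlam0 : 0 ≤ lam) (hlam : lam < d) {S T : Finset V} (hST : T.card < S.card)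
    (hδ : ∀ a ∈ S, δ ≤ ((G.neighborFinset a ∩ T).card : ℝ)) :
    δ ≤ d * T.card / n + lam := by
  have hmix := (abs_le.mp (h.expander_mixing hlam0 hlam S T)).2
  have hS : (0 : ℝ) < S.card := by exact_mod_cast (Nat.zero_le _).trans_lt hST
  have hTS : (T.card : ℝ) ≤ S.card := by exact_mod_cast hST.le
  have hsqrt : √((S.card : ℝ) * T.card) ≤ S.card :=
    Real.sqrt_le_iff.mpr ⟨hS.le, by nlinarith⟩
  have hsum : (S.card : ℝ) * δ ≤ ∑ a ∈ S, ((G.neighborFinset a ∩ T).card : ℝ) := by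
    simpa using Finset.card_nsmul_le_sum S _ δ hδ
  have hmul : lam * √((S.card : ℝ) * T.card) ≤ lam * S.card :=
    mul_le_mul_of_nonneg_left hsqrt hlam0
  have heq : (d : ℝ) * (S.card * T.card) / n = S.card * (d * T.card / n) := by ring
  refine le_of_mul_le_mul_left ?_ hS
  linarith

/-- Two vertex sets without edges between them satisfy `d √(|S||T|) ≤ λ n`. -/
lemma IsNDLGraph.sqrt_card_mul_card_le {n d : ℕ} {lam : ℝ} {V : Type*} [Fintype V]
    [DecidableEq V] {G : SimpleGraph V} [DecidableRel G.Adj] (h : IsNDLGraph n d lam G)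
    (hn : 0 < n) (hlam0 : 0 ≤ lam) (hlam : lam < d) {S T : Finset V}
    (hST : ∀ a ∈ S, ∀ b ∈ T, ¬ G.Adj a b) :
    d * √(S.card * T.card) ≤ lam * n := by
  have hmix := (abs_le.mp (h.expander_mixing hlam0 hlam S T)).1
  have hsum : ∑ a ∈ S, ((G.neighborFinset a ∩ T).card : ℝ) = 0 := by
    refine Finset.sum_eq_zero fun a ha => ?_
    rw [Nat.cast_eq_zero, Finset.card_eq_zero, ← Finset.disjoint_iff_inter_eq_empty,
      Finset.disjoint_left]
    exact fun b hb hbT => hST a ha b hbT ((G.mem_neighborFinset a b).mp hb)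
  have hn' : (0 : ℝ) < n := by exact_mod_cast hn
  rw [hsum, zero_sub, neg_le_neg_iff, div_le_iff₀ hn'] at hmix
  set s := √((S.card : ℝ) * T.card) with hs
  have hss : (S.card : ℝ) * T.card = s * s := (Real.mul_self_sqrt (by positivity)).symm
  rw [hss] at hmix
  rcases (Real.sqrt_nonneg ((S.card : ℝ) * T.card)).eq_or_lt with h0 | h0
  · rw [hs, ← h0, mul_zero]
    positivity
  · refine le_of_mul_le_mul_right ?_ h0
    linarith

/-- A quantitative form of the matching criterion: minimum degree at least `2λ` between
`A` and `B` suffices. -/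
lemma IsNDLGraph.exists_perfect_matching {n d : ℕ} {lam δ : ℝ} {V : Type*} [Fintype V]
    [DecidableEq V] {G : SimpleGraph V} [DecidableRel G.Adj] (h : IsNDLGraph n d lam G)
    (hn : 0 < n) (hlam0 : 0 ≤ lam) (hlam : lam < d) (hδ : 2 * lam ≤ δ) {A B : Finset V}
    (hAB : A.card = B.card)
    (hA : ∀ a ∈ A, δ ≤ ((G.neighborFinset a ∩ B).card : ℝ))
    (hB : ∀ b ∈ B, δ ≤ ((G.neighborFinset b ∩ A).card : ℝ)) :
    ∃ f : {x // x ∈ A} → {x // x ∈ B},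
      Function.Bijective f ∧ ∀ a : {x // x ∈ A}, G.Adj a.1 (f a).1 := by
  have hn' : (0 : ℝ) < n := by exact_mod_cast hn
  have hd : (0 : ℝ) < d := hlam0.trans_lt hlam
  have hHall : ∀ S ⊆ A, S.card ≤ (S.biUnion fun a => G.neighborFinset a ∩ B).card := by
    intro S hSA
    by_contra! hlt
    set T := S.biUnion fun a => G.neighborFinset a ∩ B with hT
    have hTB : T ⊆ B := Finset.biUnion_subset.mpr fun a _ => Finset.inter_subset_right
    have hno : ∀ a ∈ S, ∀ b ∈ B \ T, ¬ G.Adj a b := by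
      intro a ha b hb hab
      rw [Finset.mem_sdiff] at hb
      exact hb.2 (Finset.mem_biUnion.mpr
        ⟨a, ha, Finset.mem_inter.mpr ⟨(G.mem_neighborFinset a b).mpr hab, hb.1⟩⟩)
    have hlt' : (A \ S).card < (B \ T).card := by
      rw [Finset.card_sdiff_of_subset hSA, Finset.card_sdiff_of_subset hTB]
      have := Finset.card_le_card hSA
      omega
    have h1 : δ ≤ d * T.card / n + lam := by
      refine h.le_card_of_minDegree hlam0 hlam hlt fun a ha => (hA a (hSA ha)).trans ?_
      refine Nat.cast_le.mpr (Finset.card_le_card (Finset.subset_inter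
        Finset.inter_subset_left ?_))
      exact Finset.subset_biUnion_of_mem (fun a => G.neighborFinset a ∩ B) ha
    have h2 : δ ≤ d * (A \ S).card / n + lam := by
      refine h.le_card_of_minDegree hlam0 hlam hlt' fun b hb =>
        (hB b (Finset.mem_sdiff.mp hb).1).trans ?_
      refine Nat.cast_le.mpr (Finset.card_le_card fun a ha => ?_)
      rw [Finset.mem_inter, mem_neighborFinset] at ha
      rw [Finset.mem_inter, mem_neighborFinset, Finset.mem_sdiff]
      exact ⟨ha.1, ha.2, fun haS => hno a haS b hb ha.1.symm⟩
    have h3 := h.sqrt_card_mul_card_le hn hlam0 hlam hno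
    have key : ∀ {X Y : Finset V}, X.card < Y.card → δ ≤ d * X.card / n + lam →
        lam * n / d < Y.card := by
      intro X Y hXY hX
      have hXY' : (X.card : ℝ) < Y.card := by exact_mod_cast hXY
      refine lt_of_le_of_lt ?_ hXY'
      have : lam ≤ d * X.card / n := by linarith
      rw [le_div_iff₀ hn'] at this
      rw [div_le_iff₀ hd]
      linarith
    have h4 : lam * n / d < √(S.card * (B \ T).card) := by
      refine Real.lt_sqrt_of_sq_lt ?_
      rw [sq]
      exact mul_lt_mul'' (key hlt h1) (key hlt' h2) (by positivity) (by positivity)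
    rw [div_lt_iff₀ hd] at h4
    linarith
  obtain ⟨f, hf, hfm⟩ := (Finset.all_card_le_biUnion_card_iff_exists_injective
    fun a : {x // x ∈ A} => G.neighborFinset a.1 ∩ B).mp fun S => by
      have h1 := hHall (S.map (Function.Embedding.subtype _)) fun x hx => by
        obtain ⟨y, -, rfl⟩ := Finset.mem_map.mp hx
        exact y.2
      rw [Finset.card_map, Finset.map_eq_image, Finset.image_biUnion] at h1
      exact h1
  refine ⟨fun a => ⟨f a, (Finset.mem_inter.mp (hfm a)).2⟩, ?_, fun a =>
    (G.mem_neighborFinset _ _).mp (Finset.mem_inter.mp (hfm a)).1⟩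
  rw [Fintype.bijective_iff_injective_and_card]
  exact ⟨fun a b hab => hf (congrArg Subtype.val hab), by simpa using hAB⟩

/-- Lemma 2.6: for `0 < 1/C ≪ ε ≪ 1`, if `G` is an `(n,d,λ)`-graph with `n ≥ 3`
and `d/λ ≥ C log³ n`, and `A, B` are disjoint equal-size vertex sets such that
every vertex of `A` (resp. `B`) has at least `εd/(2 log³ n)` neighbours in `B`
(resp. `A`), then the bipartite graph `G[A,B]` has a perfect matching. -/
theorem ndl_bipartite_perfect_matching :
    ∃ ε₀ : ℝ, 0 < ε₀ ∧ ε₀ < 1 ∧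
      ∀ ε : ℝ, 0 < ε → ε ≤ ε₀ →
        ∃ C : ℝ, 0 < C ∧
          ∀ (n d : ℕ) (lam : ℝ), 3 ≤ n → 0 < lam →
            C * (Real.log n) ^ 3 ≤ (d : ℝ) / lam →
            ∀ (V : Type) [Fintype V] [DecidableEq V]
              (G : SimpleGraph V) [DecidableRel G.Adj],
              IsNDLGraph n d lam G →
              ∀ A B : Finset V, Disjoint A B → A.card = B.card →
                (∀ a ∈ A, ε * (d : ℝ) / (2 * (Real.log n) ^ 3) ≤
                    (((G.neighborFinset a) ∩ B).card : ℝ)) →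
                (∀ b ∈ B, ε * (d : ℝ) / (2 * (Real.log n) ^ 3) ≤
                    (((G.neighborFinset b) ∩ A).card : ℝ)) →
                ∃ f : {x // x ∈ A} → {x // x ∈ B},
                  Function.Bijective f ∧ ∀ a : {x // x ∈ A}, G.Adj a.1 (f a).1 := by
  refine ⟨1 / 2, by norm_num, by norm_num, fun ε hε hε₀ => ⟨4 / ε, by positivity, ?_⟩⟩
  intro n d lam hn hlam0 hC V _ _ G _ hG A B _ hAB hA hB
  have hL : 1 < Real.log n := by
    rw [Real.lt_log_iff_exp_lt (by positivity)]
    exact Real.exp_one_lt_three.trans_le (by exact_mod_cast hn)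
  have hL3 : 1 < Real.log n ^ 3 := one_lt_pow₀ hL (by norm_num)
  have hC' : 4 * lam * Real.log n ^ 3 ≤ ε * d := by
    rw [le_div_iff₀ hlam0, div_mul_eq_mul_div, div_mul_eq_mul_div, div_le_iff₀ hε] at hC
    linarith
  refine hG.exists_perfect_matching (by omega) hlam0.le ?_ ?_ hAB hA hB
  · have h1 : lam < lam * Real.log n ^ 3 := lt_mul_of_one_lt_right hlam0 hL3
    have h2 : ε * d ≤ 1 / 2 * d := mul_le_mul_of_nonneg_right hε₀ (Nat.cast_nonneg d)
    linarith
  · rw [le_div_iff₀ (by positivity)]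
    linarith
end
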